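/- arXiv:2302.11105 — 2 statements merged into one kernel-verified Lean document; each statement's English description precedes it below -/
import Mathlib

section
/- For z in the open unit disc of ℂ, let φ(t) = (t+z)/(1+z̄t) be the Möbius transformation of the disc, and let Ĥ₀⁻¹ act on formal power series by Ĥ₀⁻¹(Σ_{k≥0} c_k t^k) = Σ_{k≥1} (c_k/k) t^k. Then for every n ≥ 1, (φ⁻¹ ∘ Ĥ₀⁻¹ ∘ φ)(tⁿ) = Σ_{k≥1} a_k^n t^k, where a_k^n = (1/k)(1-|z|^{2k}) z^{n-k} for 1 ≤ k ≤ n, and a_k^n = (1/k) z̄^{k-n}(1-|z|^{2n}) for k ≥ n. -/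
/-- The coefficients `a_k^n`: `a_k^n = (1/k)(1-|z|^{2k}) z^{n-k}` for `1 ≤ k ≤ n` and
`a_k^n = (1/k) z̄^{k-n} (1-|z|^{2n})` for `k ≥ n` (with `a_0^n = 0`); note
`|z|^{2j} = (z z̄)^j`. -/
noncomputable def acoef (z : ℂ) (n k : ℕ) : ℂ :=
  if k = 0 then 0
  else if k ≤ n then (1 - (z * (starRingEnd ℂ) z) ^ k) * z ^ (n - k) / k
  else ((starRingEnd ℂ) z) ^ (k - n) * (1 - (z * (starRingEnd ℂ) z) ^ n) / k

/-- The Möbius transformation `φ(t) = (t+z)/(1+z̄t)` of the unit disc. -/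
noncomputable def phiMob (z t : ℂ) : ℂ := (t + z) / (1 + (starRingEnd ℂ) z * t)

/-!
Put `F(w) = ∑ a_k^n w^k`. A finite geometric sum turns both branches of `k a_k^n` into
`(1 - |z|²) ∑_{i < min(n, k)} z^{n-1-i} z̄^{k-1-i}`, so `F'` is the product of a polynomial and a
geometric series: `F'(w) = (1 - |z|²) (∑_{i < n} w^i z^{n-1-i}) / (1 - z̄ w)`. At `w = φ(t)` the
denominator is `(1 - |z|²) / (1 + z̄ t)`, and `t (1 + z̄ t) φ'(t) = φ(t) - z`; hence `t (F ∘ φ)'(t)`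
is `∑_{i < n} φ(t)^i z^{n-1-i}` times `φ(t) - z`, which telescopes to `φ(t)^n - z^n`.
-/

open scoped ComplexConjugate

section PowerSeries

theorem hasDerivAt_tsum_mul_pow {𝕜 : Type*} [RCLike 𝕜] {a : ℕ → 𝕜} {g : 𝕜 → 𝕜} {R : ℝ}
    (hg : ∀ x, ‖x‖ < R → HasSum (fun k : ℕ => (k + 1) * a (k + 1) * x ^ k) (g x))
    {w : 𝕜} (hw : ‖w‖ < R) :
    HasDerivAt (fun s => ∑' k, a k * s ^ k) (g w) w := by
  obtain ⟨r, hwr, hrR⟩ := exists_between hw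
  have hr : 0 < r := (norm_nonneg w).trans_lt hwr
  have norm_r : ‖(r : 𝕜)‖ = r := RCLike.norm_of_nonneg hr.le
  have majorant : Summable fun k : ℕ => ‖(k : 𝕜) * a k * (r : 𝕜) ^ (k - 1)‖ := by
    rw [← summable_nat_add_iff 1]
    simpa using (hg r (norm_r.trans_lt hrR)).summable.norm
  have sum_zero : Summable fun k => a k * (0 : 𝕜) ^ k :=
    summable_of_ne_finset_zero (s := {0}) fun k hk => by simp_all
  have sum_deriv : HasSum (fun k : ℕ => (k : 𝕜) * a k * w ^ (k - 1)) (g w) := by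
    rw [← hasSum_nat_add_iff' 1]
    simpa using hg w hw
  rw [← sum_deriv.tsum_eq]
  refine hasDerivAt_tsum_of_isPreconnected (g := fun k s => a k * s ^ k)
    (g' := fun k s => (k : 𝕜) * a k * s ^ (k - 1)) majorant Metric.isOpen_ball
    (convex_ball 0 r).isPreconnected (fun k y _ => ?_) (fun k y hy => ?_)
    (Metric.mem_ball_self hr) sum_zero (mem_ball_zero_iff.2 hwr)
  · convert! (hasDerivAt_pow k y).const_mul (a k) using 1
    ring
  · have hyr : ‖y‖ ≤ r := (mem_ball_zero_iff.1 hy).le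
    simp only [norm_mul, norm_pow, norm_r]
    gcongr

variable {𝕜 : Type*} [NormedField 𝕜] {q w : 𝕜}

theorem hasSum_ite_le_pow_sub_mul_pow (h : ‖q * w‖ < 1) (i : ℕ) :
    HasSum (fun k => if i ≤ k then q ^ (k - i) * w ^ k else 0) (w ^ i / (1 - q * w)) := by
  have vanish_below : ∀ k ∉ Set.range (· + i),
      (if i ≤ k then q ^ (k - i) * w ^ k else 0) = 0 := fun k hk =>
    if_neg fun hik => hk ⟨k - i, Nat.sub_add_cancel hik⟩
  rw [← (add_left_injective i).hasSum_iff vanish_below, div_eq_mul_inv]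
  convert! (hasSum_geometric_of_norm_lt_one h).mul_left (w ^ i) using 1
  funext m
  simp only [Function.comp_apply, Nat.le_add_left, if_true, Nat.add_sub_cancel]
  ring

theorem hasSum_sum_range_min_mul_pow (h : ‖q * w‖ < 1) (c : ℕ → 𝕜) (n : ℕ) :
    HasSum (fun k => (∑ i ∈ Finset.range (min n (k + 1)), c i * q ^ (k - i)) * w ^ k)
      ((∑ i ∈ Finset.range n, c i * w ^ i) / (1 - q * w)) := by
  have sum_terms := hasSum_sum (s := Finset.range n) fun i _ =>
    (hasSum_ite_le_pow_sub_mul_pow h i).mul_left (c i)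
  convert! sum_terms using 1
  · funext k
    have range_min : Finset.range (min n (k + 1)) = {i ∈ Finset.range n | i ≤ k} := by
      ext; simp
    simp only [range_min, Finset.sum_filter, Finset.sum_mul, mul_ite, ite_mul, mul_zero, zero_mul,
      mul_assoc]
  · simp only [Finset.sum_div, mul_div_assoc]

end PowerSeries

section UnitDisc

variable {z t : ℂ}

theorem norm_conj_mul_lt_one (hz : ‖z‖ < 1) (ht : ‖t‖ < 1) : ‖conj z * t‖ < 1 := by
  rw [norm_mul, Complex.norm_conj]
  exact mul_lt_one_of_nonneg_of_lt_one_left (norm_nonneg z) hz ht.le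

theorem one_add_conj_mul_ne_zero (hz : ‖z‖ < 1) (ht : ‖t‖ < 1) : 1 + conj z * t ≠ 0 := fun h => by
  have norm_lt := norm_conj_mul_lt_one hz ht
  rw [← neg_eq_of_add_eq_zero_right h, norm_neg, norm_one] at norm_lt
  exact lt_irrefl 1 norm_lt

theorem one_sub_mul_conj_ne_zero (hz : ‖z‖ < 1) : 1 - z * conj z ≠ 0 := by
  simpa [mul_comm, sub_eq_add_neg] using
    one_add_conj_mul_ne_zero (t := -z) hz (by rwa [norm_neg])

end UnitDisc

section Coefficients

theorem one_sub_mul_mul_sum_range_pow_mul_pow {R : Type*} [CommRing R] (x y : R) {m k l : ℕ}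
    (hk : m ≤ k) (hl : m ≤ l) :
    (1 - x * y) * ∑ i ∈ Finset.range m, x ^ (k - 1 - i) * y ^ (l - 1 - i)
      = x ^ (k - m) * y ^ (l - m) * (1 - (x * y) ^ m) := by
  have factor_out : ∑ i ∈ Finset.range m, x ^ (k - 1 - i) * y ^ (l - 1 - i)
      = x ^ (k - m) * y ^ (l - m) * ∑ i ∈ Finset.range m, (x * y) ^ i := by
    rw [← Finset.sum_range_reflect (fun i => (x * y) ^ i), Finset.mul_sum]
    refine Finset.sum_congr rfl fun i hi => ?_
    have him := Finset.mem_range.1 hi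
    rw [show k - 1 - i = (k - m) + (m - 1 - i) by lia,
      show l - 1 - i = (l - m) + (m - 1 - i) by lia]
    ring
  rw [factor_out, ← mul_neg_geom_sum]
  ring

theorem natCast_mul_acoef (z : ℂ) (n k : ℕ) :
    k * acoef z n k
      = z ^ (n - min n k) * conj z ^ (k - min n k) * (1 - (z * conj z) ^ min n k) := by
  rcases eq_or_ne k 0 with rfl | hk
  · simp
  have hk' : (k : ℂ) ≠ 0 := Nat.cast_ne_zero.2 hk
  rw [acoef, if_neg hk]
  split_ifs with hkn
  · rw [min_eq_right hkn, mul_div_cancel₀ _ hk']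
    simp [mul_comm]
  · rw [min_eq_left (not_le.1 hkn).le, mul_div_cancel₀ _ hk']
    simp

theorem natCast_mul_acoef_eq_sum (z : ℂ) (n k : ℕ) :
    k * acoef z n k = (1 - z * conj z) *
      ∑ i ∈ Finset.range (min n k), z ^ (n - 1 - i) * conj z ^ (k - 1 - i) := by
  rw [natCast_mul_acoef,
    one_sub_mul_mul_sum_range_pow_mul_pow z (conj z) (min_le_left n k) (min_le_right n k)]

theorem hasSum_succ_mul_acoef_mul_pow {z w : ℂ} (h : ‖conj z * w‖ < 1) (n : ℕ) :
    HasSum (fun k : ℕ => (k + 1) * acoef z n (k + 1) * w ^ k)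
      ((1 - z * conj z) *
        ((∑ i ∈ Finset.range n, w ^ i * z ^ (n - 1 - i)) / (1 - conj z * w))) := by
  convert! (hasSum_sum_range_min_mul_pow h (fun i => z ^ (n - 1 - i)) n).mul_left
    (1 - z * conj z) using 1
  · funext k
    rw [← Nat.cast_add_one, natCast_mul_acoef_eq_sum, Nat.add_sub_cancel, mul_assoc]
  · simp only [mul_comm]

theorem hasDerivAt_tsum_acoef_mul_pow {z w : ℂ} (hz : ‖z‖ < 1) (hw : ‖w‖ < 1) (n : ℕ) :
    HasDerivAt (fun s => ∑' k, acoef z n k * s ^ k)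
      ((1 - z * conj z) *
        ((∑ i ∈ Finset.range n, w ^ i * z ^ (n - 1 - i)) / (1 - conj z * w))) w :=
  hasDerivAt_tsum_mul_pow (R := 1) (fun _ hx => hasSum_succ_mul_acoef_mul_pow
    (norm_conj_mul_lt_one hz hx) n) hw

end Coefficients

section Moebius

variable {z t : ℂ}

theorem phiMob_neg_self (z : ℂ) : phiMob z (-z) = 0 := by
  simp [phiMob]

theorem one_sub_conj_mul_phiMob (h : 1 + conj z * t ≠ 0) :
    1 - conj z * phiMob z t = (1 - z * conj z) / (1 + conj z * t) := by
  rw [phiMob]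
  field_simp
  ring

theorem phiMob_sub_self (h : 1 + conj z * t ≠ 0) :
    phiMob z t - z = t * (1 - z * conj z) / (1 + conj z * t) := by
  rw [phiMob, div_sub' h]
  congr 1
  ring

theorem hasDerivAt_phiMob (h : 1 + conj z * t ≠ 0) :
    HasDerivAt (phiMob z) ((1 - z * conj z) / (1 + conj z * t) ^ 2) t := by
  convert! ((hasDerivAt_id t).add_const z).fun_div
    (((hasDerivAt_id t).const_mul (conj z)).const_add 1) h using 2
  simp only [id_eq]
  ring

theorem normSq_one_add_conj_mul_sub_normSq_add (z t : ℂ) :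
    Complex.normSq (1 + conj z * t) - Complex.normSq (t + z)
      = (1 - Complex.normSq z) * (1 - Complex.normSq t) := by
  simp only [Complex.normSq_apply, Complex.add_re, Complex.add_im, Complex.mul_re, Complex.mul_im,
    Complex.conj_re, Complex.conj_im, Complex.one_re, Complex.one_im]
  ring

theorem norm_phiMob_lt_one (hz : ‖z‖ < 1) (ht : ‖t‖ < 1) : ‖phiMob z t‖ < 1 := by
  rw [phiMob, norm_div, div_lt_one (norm_pos_iff.2 (one_add_conj_mul_ne_zero hz ht)),
    ← sq_lt_sq₀ (norm_nonneg _) (norm_nonneg _), ← Complex.normSq_eq_norm_sq,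
    ← Complex.normSq_eq_norm_sq, ← sub_pos, normSq_one_add_conj_mul_sub_normSq_add]
  have one_sub_normSq_pos : ∀ u : ℂ, ‖u‖ < 1 → 0 < 1 - Complex.normSq u := fun u hu => by
    rw [Complex.normSq_eq_norm_sq, sub_pos]
    exact pow_lt_one₀ (norm_nonneg u) hu two_ne_zero
  exact mul_pos (one_sub_normSq_pos z hz) (one_sub_normSq_pos t ht)

end Moebius

/-- `(φ⁻¹ ∘ Ĥ₀⁻¹ ∘ φ)(tⁿ) = Σ_{k ≥ 1} a_k^n t^k`.  Equivalently
(conjugating by the substitution operator `φ`), the function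
`F(t) = Σ_{k≥1} a_k^n φ(t)^k` is the image of `t ↦ φ(t)^n` under `Ĥ₀⁻¹`, i.e. it has
vanishing constant term (`F(-z) = 0`, since `φ(-z) = 0`) and satisfies
`H₀ F = t·F' = φ(t)^n - φ(0)^n = φ(t)^n - z^n` on the open unit disc. -/
theorem stmt13 (z : ℂ) (hz : ‖z‖ < 1) (n : ℕ) (hn : 1 ≤ n) :
    (∀ t : ℂ, ‖t‖ < 1 →
      t * deriv (fun s => ∑' k : ℕ, acoef z n k * phiMob z s ^ k) t
        = phiMob z t ^ n - z ^ n) ∧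
    (∑' k : ℕ, acoef z n k * phiMob z (-z) ^ k) = 0 := by
  refine ⟨fun t ht => ?_, ?_⟩
  · have hden := one_add_conj_mul_ne_zero hz ht
    have hq := one_sub_mul_conj_ne_zero hz
    have hchain := ((hasDerivAt_tsum_acoef_mul_pow hz (norm_phiMob_lt_one hz ht) n).comp t
      (hasDerivAt_phiMob hden)).deriv
    simp only [Function.comp_def] at hchain
    rw [hchain, one_sub_conj_mul_phiMob hden, ← (Commute.all (phiMob z t) z).geom_sum₂_mul n,
      phiMob_sub_self hden]
    field_simp
  · rw [phiMob_neg_self, tsum_eq_single 0 fun k hk => by rw [zero_pow hk, mul_zero], acoef,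
      if_pos rfl, zero_mul]
end

section
/- Let g = so₈(ℂ) (type D₄) with the order-3 diagram automorphism σ corresponding to the 3-cycle (134) on the Dynkin diagram, so g^σ is of type G₂. Then the partial Casimir operator C₁ = Σ_{[b]=1} ad_b ad_{b̌} (summed over a basis of the ε-eigenspace g₁ with dual basis in g₂, with respect to the normalized invariant form) acts on g₁ by the scalar 4 = 2ȟ/3, where ȟ = 6 is the dual Coxeter number of D₄. -/
/-!
Let `𝒜 0`, `𝒜 1`, `𝒜 2` be the eigenspaces of `σ`, `κ` the Killing form, `b`, `b̌` dual bases of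
`𝒜 1`, `𝒜 2` for `κ`, `C = ∑ ad b ad b̌`, and `h = ∑ [b, b̌]`. For `x ∈ 𝒜 1` and `y ∈ 𝒜 2` the
traces of `ad x ad y` on the three eigenspaces are `κ(C x, y)`, `κ(C x, y)` and
`κ(C x - [h, x], y)`, whence `3 C x = x + [h, x]`. The element `h` is central in `𝒜 0`, so it acts
on `𝒜 1` by a scalar `c`, and comparing `κ` with the Killing form of `𝒜 0` shows that `h = 0` or
`c = 1/2`.

The second case is impossible. The ideal `s` of elements of `𝒜 0` acting on `𝒜 1` with trace zero
would have dimension 13 and be simple because `dim 𝒜 1 = 7` is prime. So `C` would be a scalar on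
`s`, equal to `3/13` by a trace computation, and it would follow that `3 κ_s = 7 tr_{𝒜 1}` on `s`.
At the coroot `H` of a long root, however, `κ_s(H, H) = 8 + 2n` with `n` even and `2n + 2 ≤ 13`,
while `tr(H²)` on `𝒜 1` is an integer, and no such `8 + 2n` is divisible by 7. Hence `h = 0` and
`C = 1/3` on `𝒜 1`; for dual bases with respect to `B` instead, `κ = 12 B` gives `12/3 = 4`.
-/

open Finset LieModule LieAlgebra

section Sl2

variable {K L V : Type*} [Field K] [CharZero K] [LieRing L] [LieAlgebra K L]
  [AddCommGroup V] [Module K V] [Module.Finite K V] [LieRingModule L V] [LieModule K L V]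
  {h e f : L}

theorem exists_pow_toEnd_eq_zero_of_isSl2Triple (t : IsSl2Triple h e f) {μ : K} {m : V}
    (hm : ⁅h, m⁆ = μ • m) : ∃ k : ℕ, (toEnd K L V e ^ k) m = 0 := by
  by_contra! hne
  have hinf : (Set.range fun n : ℕ ↦ μ + 2 * (n : K)).Infinite :=
    Set.infinite_range_of_injective fun a b hab ↦ by simpa using hab
  refine hinf ((toEnd K L V h).finite_hasEigenvalue.subset ?_)
  rintro _ ⟨n, rfl⟩
  refine Module.End.hasEigenvalue_of_hasEigenvector
    (x := (toEnd K L V e ^ n) m) ⟨?_, hne n⟩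
  simpa using t.lie_h_pow_toEnd_e hm n

theorem exists_int_eq_of_hasEigenvalue_toEnd (t : IsSl2Triple h e f) {μ : K}
    (hμ : (toEnd K L V h).HasEigenvalue μ) : ∃ n : ℤ, (n : K) = μ := by
  obtain ⟨m, hm⟩ := hμ.exists_hasEigenvector
  have hhm : ⁅h, m⁆ = μ • m := by simpa using hm.apply_eq_smul
  obtain ⟨n, hn, hn'⟩ := Nat.exists_not_and_succ_of_not_zero_of_exists
    (p := fun k ↦ (toEnd K L V e ^ k) m = 0) (by simpa using hm.2)
    (exists_pow_toEnd_eq_zero_of_isSl2Triple t hhm)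
  have hprim : t.HasPrimitiveVectorWith ((toEnd K L V e ^ n) m) (μ + 2 * n) :=
    { ne_zero := hn
      lie_h := t.lie_h_pow_toEnd_e hhm n
      lie_e := by simpa [pow_succ'] using hn' }
  obtain ⟨k, hk⟩ := hprim.exists_nat
  exact ⟨k - 2 * n, by push_cast; rw [← hk]; ring⟩

theorem exists_int_eq_traceForm_of_isSl2Triple [IsAlgClosed K] (t : IsSl2Triple h e f) :
    ∃ n : ℤ, (n : K) = traceForm K L V h h := by
  rw [traceForm_apply_apply, Module.End.trace_eq_sum_roots_charpoly_of_splits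
    (IsAlgClosed.splits _)]
  refine multiset_sum_mem (S := (Int.castRingHom K).range) _ fun z hz ↦ ?_
  have hz' : z ∈ spectrum K (toEnd K L V h ^ 2) := by
    rw [← Module.End.hasEigenvalue_iff_mem_spectrum, Module.End.hasEigenvalue_iff_isRoot_charpoly,
      pow_two]
    exact Polynomial.isRoot_of_mem_roots hz
  rw [spectrum.map_pow_of_pos _ two_pos] at hz'
  obtain ⟨μ, hμ, rfl⟩ := hz'
  obtain ⟨n, rfl⟩ := exists_int_eq_of_hasEigenvalue_toEnd t
    (Module.End.hasEigenvalue_iff_mem_spectrum.mpr hμ)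
  exact ⟨n ^ 2, by simp⟩

end Sl2

section LongRoot

variable {ι K M N : Type*} [Field K] [CharZero K] [AddCommGroup M] [Module K M]
  [AddCommGroup N] [Module K N] (P : RootPairing ι K M N) [P.IsCrystallographic]

theorem pairingIn_reflectionPerm_left (i j : ι) :
    P.pairingIn ℤ (P.reflectionPerm i j) i = -P.pairingIn ℤ j i := by
  rw [← P.pairingIn_reflectionPerm, P.pairingIn_reflectionPerm_self_right]

theorem exists_long_root [Finite ι] [P.IsReduced] [Nonempty ι] :
    ∃ i, ∀ j, j ≠ i → j ≠ P.reflectionPerm i i → |P.pairingIn ℤ j i| ≤ 1 := by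
  have := Fintype.ofFinite ι
  obtain ⟨i, hi⟩ := Finite.exists_max fun i ↦ (P.posRootForm ℤ).rootLength i
  refine ⟨i, fun j hji hji' ↦ of_not_not fun hlt ↦ (hi j).not_gt ?_⟩
  refine (P.posRootForm ℤ).rootLength_lt_of_pairingIn_notMem
    (P.root.injective.ne hji) (fun h ↦ hji' (P.root.injective ?_)) ?_
  · rw [h, P.root_reflectionPerm, P.reflection_apply_self]
  · simpa [Int.abs_le_one_iff, or_assoc, or_comm, or_left_comm] using hlt

variable [Fintype ι]

theorem card_pairingIn_eq_neg_one (i : ι) :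
    #{j | P.pairingIn ℤ j i = -1} = #{j | P.pairingIn ℤ j i = 1} := by
  refine card_bij' (fun j _ ↦ P.reflectionPerm i j) (fun j _ ↦ P.reflectionPerm i j) ?_ ?_ ?_ ?_ <;>
    simp +contextual [pairingIn_reflectionPerm_left]

theorem even_card_pairingIn_eq_one [P.IsReduced] (i : ι) :
    Even #{j | P.pairingIn ℤ j i = 1} := by
  let τ (j : ι) : ι := P.reflectionPerm (P.reflectionPerm i j) (P.reflectionPerm i j)
  have hτ (j) : P.pairingIn ℤ (τ j) i = P.pairingIn ℤ j i := by
    simp [τ, pairingIn_reflectionPerm_left]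
  have root_τ {j} (hj : P.pairingIn ℤ j i = 1) : P.root (τ j) = P.root i - P.root j := by
    have hj' : P.pairing j i = 1 := by simpa [hj] using (P.algebraMap_pairingIn ℤ j i).symm
    rw [P.root_reflectionPerm, P.reflection_apply_self, P.root_reflectionPerm,
      P.reflection_apply_root, hj', one_smul, neg_sub]
  rw [← ZMod.natCast_eq_zero_iff_even, cast_card]
  refine sum_involution (fun j _ ↦ τ j) (fun _ _ ↦ by decide) (fun j hj _ hfix ↦ ?_)
    (fun j hj ↦ ?_) fun j hj ↦ ?_ <;> rw [mem_filter_univ] at hj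
  · have hij : P.root i = 2 • P.root j := by
      rw [two_nsmul, ← sub_eq_iff_eq_add, ← root_τ hj, hfix]
    have : Module.IsReflexive K M := .of_isPerfPair P.toLinearMap
    have : IsAddTorsionFree M := .of_isTorsionFree K M
    exact P.nsmul_notMem_range_root (n := 2) (i := j) ⟨i, hij⟩
  · rw [mem_filter_univ, hτ, hj]
  · apply P.root.injective
    rw [root_τ ((hτ j).trans hj), root_τ hj, sub_sub_cancel]

theorem exists_sum_pairingIn_sq [P.IsReduced] [Nonempty ι] :
    ∃ i, ∃ n : ℕ, Even n ∧ 2 * n + 2 ≤ Fintype.card ι ∧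
      ∑ j, P.pairingIn ℤ j i ^ 2 = 8 + 2 * n := by
  classical
  obtain ⟨i, hi⟩ := exists_long_root P
  set m := P.reflectionPerm i i
  have hpi : P.pairingIn ℤ i i = 2 := P.pairingIn_same ℤ i
  have hpm : P.pairingIn ℤ m i = -2 := by rw [pairingIn_reflectionPerm_left, hpi]
  have him : i ≠ m := fun h ↦ by grind
  have hcount (j) : (if j = i then 1 else 0) + (if j = m then 1 else 0) +
      (if P.pairingIn ℤ j i = 1 then 1 else 0) + (if P.pairingIn ℤ j i = -1 then 1 else 0) ≤ 1 := by
    by_cases hji : j = i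
    · simp [hji, him]
    by_cases hjm : j = m
    · simp [hjm, hpm, him.symm]
    rcases Int.abs_le_one_iff.mp (hi j hji hjm) with h | h | h <;> simp [h, hji, hjm]
  have hsq (j) : P.pairingIn ℤ j i ^ 2 = (if j = i then 4 else 0) + (if j = m then 4 else 0) +
      (if P.pairingIn ℤ j i = 1 then 1 else 0) + (if P.pairingIn ℤ j i = -1 then 1 else 0) := by
    by_cases hji : j = i
    · simp [hji, him]
    by_cases hjm : j = m
    · simp [hjm, hpm, him.symm]
    rcases Int.abs_le_one_iff.mp (hi j hji hjm) with h | h | h <;> simp [h, hji, hjm]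
  refine ⟨i, #{j | P.pairingIn ℤ j i = 1}, even_card_pairingIn_eq_one P i, ?_, ?_⟩
  · have := sum_le_sum fun j (_ : j ∈ univ) ↦ hcount j
    simp only [sum_add_distrib, sum_ite_eq', mem_univ, if_true, sum_boole,
      card_pairingIn_eq_neg_one, sum_const, card_univ, smul_eq_mul, mul_one, Nat.cast_id] at this
    omega
  · simp only [hsq, sum_add_distrib, sum_ite_eq', mem_univ, if_true, sum_boole,
      card_pairingIn_eq_neg_one]
    push_cast
    ring

end LongRoot

section LongCoroot

open LieAlgebra.IsKilling

variable {K L : Type*} [Field K] [LieRing L] [LieAlgebra K L] [Module.Finite K L]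
  (H : LieSubalgebra K L) [H.IsCartanSubalgebra]

theorem card_root_le_finrank : Fintype.card H.root ≤ Module.finrank K L := by
  classical
  have hindep := LieSubmodule.iSupIndep_toSubmodule.mpr (iSupIndep_genWeightSpace' K H L)
  refine le_trans ?_ hindep.subtype_ne_bot_le_finrank
  exact Fintype.card_le_of_injective (fun α ↦ ⟨α.1, by simpa using α.1.genWeightSpace_ne_bot⟩)
    fun α β h ↦ Subtype.ext (congrArg (fun γ ↦ γ.1) h)

variable [CharZero K] [IsAlgClosed K] [IsKilling K L]

theorem nonempty_root_of_isCartanSubalgebra [Nontrivial L] : Nonempty H.root := by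
  by_contra hempty
  rw [not_nonempty_iff] at hempty
  have hspan := RootPairing.IsRootSystem.span_root_eq_top (P := rootSystem H)
  rw [Set.range_eq_empty, Submodule.span_empty] at hspan
  exact bot_ne_top hspan

variable (K L) in
theorem exists_isSl2Triple_killingForm_eq [Nontrivial L] :
    ∃ h e f : L, IsSl2Triple h e f ∧ ∃ n : ℕ, Even n ∧ 2 * n + 2 ≤ Module.finrank K L ∧
      killingForm K L h h = 8 + 2 * n := by
  obtain ⟨x, hx⟩ := exists_isCartanSubalgebra_engel K L
  set H := LieSubalgebra.engel K x
  have := nonempty_root_of_isCartanSubalgebra H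
  obtain ⟨α, n, hn, hcard, hsum⟩ := exists_sum_pairingIn_sq (rootSystem H)
  have hα := LieSubalgebra.isNonZero_coe_root α
  obtain ⟨h, e, f, t, he, hf⟩ := exists_isSl2Triple_of_weight_isNonZero hα
  refine ⟨h, e, f, t, n, hn, hcard.trans (card_root_le_finrank H), ?_⟩
  calc killingForm K L h h
      = (rootSystem H).CorootForm (coroot α) (coroot α) := by
        rw [corootForm_rootSystem_eq_killing, t.h_eq_coroot hα he hf]
        rfl
    _ = ∑ β, (algebraMap ℤ K ((rootSystem H).pairingIn ℤ β α)) ^ 2 := by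
        simp_rw [RootPairing.corootForm_apply_apply, RootPairing.algebraMap_pairingIn, pow_two]
        rfl
    _ = 8 + 2 * n := by
        simp_rw [← map_pow, ← map_sum, hsum]
        simp

end LongCoroot

section Schur

variable {K L V : Type*} [Field K] [IsAlgClosed K] [LieRing L] [LieAlgebra K L]
  [AddCommGroup V] [Module K V] [Module.Finite K V] [LieRingModule L V] [LieModule K L V]

theorem exists_forall_eq_smul_of_isIrreducible [IsIrreducible K L V] (F : V →ₗ⁅K,L⁆ V) :
    ∃ c : K, ∀ m, F m = c • m := by
  have := nontrivial_of_isIrreducible K L V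
  obtain ⟨c, hc⟩ := Module.End.exists_eigenvalue (F : Module.End K V)
  obtain ⟨m, hm, hm0⟩ := hc.exists_hasEigenvector
  have hker : (F - c • LieModuleHom.id).ker = ⊤ := by
    refine (eq_bot_or_eq_top _).resolve_left fun hbot ↦ hm0 ?_
    rw [← LieSubmodule.mem_bot (R := K) (L := L), ← hbot, LieModuleHom.mem_ker]
    simpa [sub_eq_zero] using Module.End.mem_eigenspace_iff.mp hm
  refine ⟨c, fun m ↦ ?_⟩
  have hm : m ∈ (F - c • LieModuleHom.id).ker := hker ▸ LieSubmodule.mem_top m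
  simpa [sub_eq_zero] using hm

end Schur

section PrimeDimension

variable {K : Type*} [Field K]

theorem exists_eq_smul_or_isSimpleModule_of_isotypicComponent_eq_top {A V : Type*} [Ring A]
    [Algebra K A] [AddCommGroup V] [Module K V] [Module.Finite K V] [Module A V]
    [IsScalarTower K A V]
    (hV : (Module.finrank K V).Prime) (W : Submodule A V) [IsSimpleModule A W]
    (hW : isotypicComponent A V W = ⊤) :
    (∀ a : A, ∃ c : K, ∀ m : V, a • m = c • m) ∨ IsSimpleModule A V := by
  have hss : IsSemisimpleModule A (isotypicComponent A V W) := inferInstance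
  rw [hW] at hss
  have : IsSemisimpleModule A V := .congr (Submodule.topEquiv (R := A) (M := V)).symm
  have : Module.Finite A V := .of_restrictScalars_finite K A V
  obtain ⟨n, ⟨e⟩⟩ := (IsIsotypicOfType.of_isotypicComponent_eq_top hW).linearEquiv_fun
  have : Module.Finite K W := inferInstanceAs (Module.Finite K (W.restrictScalars K))
  have hn : n * Module.finrank K W = Module.finrank K V := by
    rw [(e.restrictScalars K).finrank_eq, Module.finrank_pi_fintype]
    simp
  rcases (Nat.dvd_prime hV).mp ⟨n, by rw [← hn, mul_comm]⟩ with hone | hfull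
  · refine .inl fun a ↦ ?_
    obtain ⟨w, _, hw⟩ := finrank_eq_one_iff'.mp hone
    obtain ⟨c, hc⟩ := hw (a • w)
    refine ⟨c, fun m ↦ e.injective (funext fun k ↦ ?_)⟩
    obtain ⟨d, hd⟩ := hw (e m k)
    calc e (a • m) k = a • d • w := by rw [hd, map_smul, Pi.smul_apply]
      _ = c • d • w := by rw [smul_comm, ← hc, smul_comm]
      _ = e (c • m) k := by rw [hd]; exact congrFun ((e.restrictScalars K).map_smul c m).symm k
  · have hWtop : W = ⊤ := (Submodule.restrictScalars_eq_top_iff K A V).mp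
      (Submodule.eq_top_of_finrank_eq hfull)
    subst hWtop
    exact .inr (.congr (Submodule.topEquiv (R := A) (M := V)).symm)

variable {L V : Type*} [LieRing L] [LieAlgebra K L]
  [AddCommGroup V] [Module K V] [LieRingModule L V] [LieModule K L V]

/-- The associative algebra of endomorphisms of `V` generated by the action of the ideal `J`. -/
abbrev adjoinIdeal (V : Type*) [AddCommGroup V] [Module K V] [LieRingModule L V] [LieModule K L V]
    (J : LieIdeal K L) : Subalgebra K (Module.End K V) :=
  Algebra.adjoin K (toEnd K L V '' J)

/-- The action on `V` of an element `y` commuting with `J`, as an endomorphism over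
`adjoinIdeal V J`, to which the Schur lemma for that algebra applies. -/
def commutingEnd {J : LieIdeal K L} {y : L} (hy : ∀ x ∈ J, ⁅x, y⁆ = 0) :
    Module.End (adjoinIdeal V J) V where
  __ := toEnd K L V y
  map_smul' a m := by
    have hle : adjoinIdeal V J ≤ Subalgebra.centralizer K {toEnd K L V y} := by
      refine Algebra.adjoin_le ?_
      rintro _ ⟨x, hx, rfl⟩ _ rfl
      ext m
      simp [leibniz_lie x y m, hy x hx]
    exact LinearMap.congr_fun (hle a.2 _ rfl) m

variable {J I : LieIdeal K L} (hJI : ∀ x ∈ J, ∀ y ∈ I, ⁅x, y⁆ = 0) (hsup : J ⊔ I = ⊤)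
  [IsIrreducible K L V]

include hJI hsup

theorem isotypicComponent_adjoinIdeal_eq_top
    (W : Submodule (adjoinIdeal V J) V) [IsSimpleModule (adjoinIdeal V J) W] :
    isotypicComponent (adjoinIdeal V J) V W = ⊤ := by
  let N : LieSubmodule K L V :=
    { (isotypicComponent (adjoinIdeal V J) V W).restrictScalars K with
      lie_mem := by
        intro x m hm
        obtain ⟨u, hu, v, hv, rfl⟩ :=
          (LieSubmodule.mem_sup J I x).mp (hsup ▸ LieSubmodule.mem_top x)
        let a : adjoinIdeal V J := ⟨toEnd K L V u, Algebra.subset_adjoin ⟨u, hu, rfl⟩⟩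
        rw [add_lie]
        exact add_mem (Submodule.smul_mem _ a hm) (LinearMap.le_comap_isotypicComponent W
          (commutingEnd (V := V) fun x hx ↦ hJI x hx v hv) hm) }
  have hN : N = ⊤ := by
    refine (eq_bot_or_eq_top N).resolve_left fun hbot ↦
      (isSimpleModule_iff_isAtom.mp ‹IsSimpleModule (adjoinIdeal V J) W›).1 ?_
    rw [eq_bot_iff]
    intro m hm
    have hmN : m ∈ N := W.le_isotypicComponent hm
    rwa [hbot] at hmN
  exact (Submodule.restrictScalars_eq_top_iff K _ _).mp (congrArg LieSubmodule.toSubmodule hN)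

theorem acts_by_scalars_or_acts_by_scalars [IsAlgClosed K] (hV : (Module.finrank K V).Prime) :
    (∀ x ∈ J, ∃ c : K, ∀ m : V, ⁅x, m⁆ = c • m) ∨ ∀ y ∈ I, ∃ c : K, ∀ m : V, ⁅y, m⁆ = c • m := by
  have : Module.Finite K V := Module.finite_of_finrank_pos hV.pos
  have := nontrivial_of_isIrreducible K L V
  have : IsArtinian (adjoinIdeal V J) V := isArtinian_of_tower K inferInstance
  obtain ⟨W, hW⟩ := IsAtomic.exists_atom (Submodule (adjoinIdeal V J) V)
  rw [← isSimpleModule_iff_isAtom] at hW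
  rcases exists_eq_smul_or_isSimpleModule_of_isotypicComponent_eq_top hV W
    (isotypicComponent_adjoinIdeal_eq_top hJI hsup W) with hscalar | _
  · exact .inl fun x hx ↦
      hscalar (⟨toEnd K L V x, Algebra.subset_adjoin ⟨x, hx, rfl⟩⟩ : adjoinIdeal V J)
  · refine .inr fun y hy ↦ ?_
    obtain ⟨c, hc⟩ := (IsSimpleModule.algebraMap_end_bijective_of_isAlgClosed K).surjective
      (commutingEnd (V := V) fun x hx ↦ hJI x hx y hy)
    exact ⟨c, fun m ↦ (LinearMap.congr_fun hc m).symm⟩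

end PrimeDimension

section FaithfulSimplicity

variable {K L V : Type*} [Field K] [CharZero K] [LieRing L] [LieAlgebra K L]
  [AddCommGroup V] [Module K V] [Module.Finite K V] [LieRingModule L V] [LieModule K L V]

theorem eq_bot_of_acts_by_scalars [Nontrivial V] [IsFaithful K L V]
    (htr : ∀ x, LinearMap.trace K V (toEnd K L V x) = 0) {J : LieIdeal K L}
    (hJ : ∀ x ∈ J, ∃ c : K, ∀ m : V, ⁅x, m⁆ = c • m) : J = ⊥ := by
  rw [eq_bot_iff]
  intro x hx
  obtain ⟨c, hc⟩ := hJ x hx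
  have hx' : toEnd K L V x = c • 1 := LinearMap.ext hc
  have hc0 : c = 0 := by simpa [hx', Module.finrank_pos.ne'] using htr x
  refine (isFaithful_iff' K L V).mp inferInstance x fun m ↦ ?_
  rw [hc, hc0, zero_smul]

theorem isIrreducible_self_of_finrank_prime [IsAlgClosed K] [Module.Finite K L] [Nontrivial L]
    [IsIrreducible K L V] [IsFaithful K L V]
    (htr : ∀ x, LinearMap.trace K V (toEnd K L V x) = 0) (hV : (Module.finrank K V).Prime) :
    IsIrreducible K L L := by
  have := nontrivial_of_isIrreducible K L V
  have := hasTrivialRadical_of_isIrreducible_of_isFaithful K L V htr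
  refine .mk fun J hJ ↦ ?_
  obtain ⟨I, hI⟩ := exists_isCompl (J : LieIdeal K L)
  have hJI : ∀ x ∈ J, ∀ y ∈ I, ⁅x, y⁆ = 0 := fun x hx y hy ↦ by
    have : ⁅x, y⁆ ∈ J ⊓ I := ⟨lie_mem_left K L J x y hx, lie_mem_right K L I x y hy⟩
    rwa [hI.inf_eq_bot] at this
  rcases acts_by_scalars_or_acts_by_scalars hJI hI.sup_eq_top hV with h | h
  · exact absurd (eq_bot_of_acts_by_scalars htr h) hJ
  · rw [← hI.sup_eq_top, eq_bot_of_acts_by_scalars htr h, sup_bot_eq]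

end FaithfulSimplicity

section TraceFree

variable (K L V : Type*) [Field K] [LieRing L] [LieAlgebra K L]
  [AddCommGroup V] [Module K V] [LieRingModule L V] [LieModule K L V]

/-- The ideal of elements of `L` acting on `V` with trace zero. -/
noncomputable def traceFreeIdeal : LieIdeal K L where
  __ := LinearMap.ker (LinearMap.trace K V ∘ₗ (toEnd K L V : L →ₗ[K] Module.End K V))
  lie_mem {x y} _ := by
    have hxy : toEnd K L V ⁅x, y⁆ = toEnd K L V x * toEnd K L V y - toEnd K L V y * toEnd K L V x :=
      LinearMap.ext fun m ↦ lie_lie x y m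
    change LinearMap.trace K V (toEnd K L V ⁅x, y⁆) = 0
    rw [hxy, map_sub, LinearMap.trace_mul_comm, sub_self]

variable {K L V}

theorem mem_traceFreeIdeal {x : L} :
    x ∈ traceFreeIdeal K L V ↔ LinearMap.trace K V (toEnd K L V x) = 0 :=
  Iff.rfl

theorem isFaithful_traceFreeIdeal [IsFaithful K L V] : IsFaithful K (traceFreeIdeal K L V) V :=
  (isFaithful_iff' ..).mpr fun x hx ↦ Subtype.ext ((isFaithful_iff' K L V).mp ‹_› x hx)

variable [CharZero K] [Module.Finite K V] [IsIrreducible K L V] {z : L} {c : K}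
  (hz : ∀ m : V, ⁅z, m⁆ = c • m) (hc : c ≠ 0)

include hz hc

theorem trace_toEnd_ne_zero : LinearMap.trace K V (toEnd K L V z) ≠ 0 := by
  have := nontrivial_of_isIrreducible K L V
  have hz' : toEnd K L V z = c • 1 := LinearMap.ext hz
  simp [hz', hc, Module.finrank_pos.ne']

theorem isIrreducible_traceFreeIdeal : IsIrreducible K (traceFreeIdeal K L V) V := by
  have := nontrivial_of_isIrreducible K L V
  have hχ := trace_toEnd_ne_zero hz hc
  set χ := fun u ↦ LinearMap.trace K V (toEnd K L V u)
  refine .mk fun N hN ↦ ?_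
  let N' : LieSubmodule K L V :=
    { N with
      lie_mem := fun {u m} hm ↦ by
        have hs : u - (χ u * (χ z)⁻¹) • z ∈ traceFreeIdeal K L V := by
          rw [mem_traceFreeIdeal]
          simp [χ, hχ]
        have hu : ⁅u, m⁆ = ⁅(⟨_, hs⟩ : traceFreeIdeal K L V), m⁆ + (χ u * (χ z)⁻¹ * c) • m := by
          rw [LieIdeal.coe_bracket_of_module, sub_lie, smul_lie, hz]
          module
        rw [hu]
        exact add_mem (N.lie_mem hm) (N.smul_mem _ hm) }
  have hN' : N' = ⊤ := (eq_bot_or_eq_top N').resolve_left fun h ↦ hN <| by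
    rw [← LieSubmodule.toSubmodule_inj] at h ⊢
    exact h
  rw [← LieSubmodule.toSubmodule_inj] at hN' ⊢
  exact hN'

theorem isKilling_traceFreeIdeal [IsAlgClosed K] [Module.Finite K L] [IsFaithful K L V] :
    IsKilling K (traceFreeIdeal K L V) := by
  have := isIrreducible_traceFreeIdeal hz hc
  have := isFaithful_traceFreeIdeal (K := K) (L := L) (V := V)
  have := hasTrivialRadical_of_isIrreducible_of_isFaithful K (traceFreeIdeal K L V) V
    fun x ↦ mem_traceFreeIdeal.mp x.2
  infer_instance

theorem isIrreducible_self_traceFreeIdeal [IsAlgClosed K] [Module.Finite K L] [IsFaithful K L V]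
    [Nontrivial (traceFreeIdeal K L V)] (hV : (Module.finrank K V).Prime) :
    IsIrreducible K (traceFreeIdeal K L V) (traceFreeIdeal K L V) := by
  have := isIrreducible_traceFreeIdeal hz hc
  have := isFaithful_traceFreeIdeal (K := K) (L := L) (V := V)
  exact isIrreducible_self_of_finrank_prime (V := V) (fun x ↦ mem_traceFreeIdeal.mp x.2) hV

theorem finrank_traceFreeIdeal_add_one [Module.Finite K L] :
    Module.finrank K (traceFreeIdeal K L V) + 1 = Module.finrank K L := by
  refine Module.Dual.finrank_ker_add_one_of_ne_zero
    (f := LinearMap.trace K V ∘ₗ (toEnd K L V : L →ₗ[K] Module.End K V)) fun h ↦ ?_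
  exact trace_toEnd_ne_zero hz hc (LinearMap.congr_fun h z)

end TraceFree

theorem exists_three_mul_killingForm_ne {K : Type*} (L V : Type*) [Field K] [CharZero K]
    [IsAlgClosed K] [LieRing L] [LieAlgebra K L] [Module.Finite K L] [IsKilling K L] [Nontrivial L]
    [AddCommGroup V] [Module K V] [Module.Finite K V] [LieRingModule L V] [LieModule K L V]
    (hL : Module.finrank K L < 22) :
    ∃ h : L, 3 * killingForm K L h h ≠ 7 * traceForm K L V h h := by
  obtain ⟨h, e, f, t, n, hn, hcard, hκ⟩ := exists_isSl2Triple_killingForm_eq K L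
  obtain ⟨m, hm⟩ := exists_int_eq_traceForm_of_isSl2Triple (K := K) (V := V) t
  refine ⟨h, fun heq ↦ ?_⟩
  rw [hκ, ← hm] at heq
  norm_cast at heq
  obtain ⟨k, rfl⟩ := hn
  omega

section Grading

variable {ι K g : Type*} [DecidableEq ι] [Field K] [LieRing g] [LieAlgebra K g]

theorem lie_mem_graded [AddCommMonoid ι] {𝒜 : ι → Submodule K g} [GradedLieAlgebra 𝒜]
    {i j k : ι} {x y : g} (hx : x ∈ 𝒜 i) (hy : y ∈ 𝒜 j) (hk : i + j = k) : ⁅x, y⁆ ∈ 𝒜 k :=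
  hk ▸ SetLike.GradedBracket.bracket_mem hx hy

variable [Module.Finite K g] [AddCommGroup ι] {𝒜 : ι → Submodule K g} [GradedLieAlgebra 𝒜]
  {i j : ι} {x y : g}

theorem killingForm_eq_zero_of_add_ne_zero (hij : i + j ≠ 0) (hx : x ∈ 𝒜 i) (hy : y ∈ 𝒜 j) :
    killingForm K g x y = 0 := by
  rw [killingForm_apply_apply]
  refine LinearMap.trace_eq_zero_of_mapsTo_ne (DirectSum.Decomposition.isInternal 𝒜)
    (i + j + ·) (fun k ↦ by simpa using hij) fun k z hz ↦ ?_
  exact lie_mem_graded hx (lie_mem_graded hy hz rfl) (add_assoc i j k).symm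

theorem eq_zero_of_killingForm_neg_eq_zero [IsKilling K g] (hx : x ∈ 𝒜 i)
    (h : ∀ y ∈ 𝒜 (-i), killingForm K g x y = 0) : x = 0 := by
  refine (IsKilling.killingForm_nondegenerate K g).1 x fun y ↦ ?_
  have hy : y ∈ ⨆ j, 𝒜 j :=
    (DirectSum.Decomposition.isInternal 𝒜).submodule_iSup_eq_top ▸ Submodule.mem_top
  refine Submodule.iSup_induction 𝒜 (motive := (killingForm K g x · = 0)) hy
    (fun j y hy ↦ ?_) (map_zero _) fun y z hy hz ↦ ?_
  · by_cases hij : i + j = 0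
    · exact h y (neg_eq_of_add_eq_zero_right hij ▸ hy)
    · exact killingForm_eq_zero_of_add_ne_zero hij hx hy
  · rw [map_add, hy, hz, add_zero]

end Grading

section DualFrame

variable {ι K V : Type*} [Fintype ι] [Field K] [AddCommGroup V] [Module K V]

/-- `b` and `bd` are dual families for the pairing between `U` and `W` given by `B`: the bases
`{b}` and `{b̌}` of the informal statement. Duality is encoded by the two expansion formulas it is
used for, so linear independence is not required. -/
structure IsDualFrame (B : LinearMap.BilinForm K V) (U W : Submodule K V) (b bd : ι → V) :
    Prop where
  left_mem : ∀ i, b i ∈ U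
  right_mem : ∀ i, bd i ∈ W
  sum_left : ∀ x ∈ U, ∑ i, B x (bd i) • b i = x
  sum_right : ∀ y ∈ W, ∑ i, B (b i) y • bd i = y

namespace IsDualFrame

variable {B : LinearMap.BilinForm K V} {U W : Submodule K V} {b bd : ι → V}

theorem of_dual [DecidableEq ι] (hb : ∀ i, b i ∈ U) (hbd : ∀ i, bd i ∈ W)
    (hspan : U ≤ Submodule.span K (Set.range b))
    (hdual : ∀ i j, B (b i) (bd j) = if i = j then 1 else 0)
    (hsep : ∀ y ∈ W, (∀ x ∈ U, B x y = 0) → y = 0) : IsDualFrame B U W b bd where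
  left_mem := hb
  right_mem := hbd
  sum_left x hx := by
    let F : Module.End K V := ∑ i, (B.flip (bd i)).smulRight (b i)
    have hF : Set.EqOn F (LinearMap.id : Module.End K V) (Set.range b) := by
      rintro _ ⟨i, rfl⟩
      simp [F, hdual]
    simpa [F] using LinearMap.eqOn_span hF (hspan hx)
  sum_right y hy := by
    set z := ∑ i, B (b i) y • bd i
    have hz : Set.EqOn (B.flip (z - y)) (0 : V →ₗ[K] K) (Set.range b) := by
      rintro _ ⟨i, rfl⟩
      simp [z, hdual]
    refine sub_eq_zero.mp (hsep _ (sub_mem (sum_mem fun i _ ↦ W.smul_mem _ (hbd i)) hy) ?_)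
    exact fun x hx ↦ by simpa using LinearMap.eqOn_span hz (hspan hx)

theorem symm (hB : ∀ x y, B x y = B y x) (h : IsDualFrame B U W b bd) :
    IsDualFrame B W U bd b where
  left_mem := h.right_mem
  right_mem := h.left_mem
  sum_left y hy := by simpa only [hB] using h.sum_right y hy
  sum_right x hx := by simpa only [hB] using h.sum_left x hx

theorem trace_restrict [Module.Finite K V] (h : IsDualFrame B U W b bd) {F : Module.End K V}
    (hF : ∀ x ∈ U, F x ∈ U) :
    LinearMap.trace K U (F.restrict hF) = ∑ i, B (F (b i)) (bd i) := by
  have hsum : F.restrict hF = ∑ i, ((B.flip (bd i) ∘ₗ F).domRestrict U).smulRight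
      (⟨b i, h.left_mem i⟩ : U) := by
    refine LinearMap.ext fun x ↦ Subtype.ext ?_
    simpa using (h.sum_left (F x) (hF x x.2)).symm
  rw [hsum, map_sum]
  exact Finset.sum_congr rfl fun i _ ↦ LinearMap.trace_smulRight _ _

theorem finrank_eq [CharZero K] [Module.Finite K V] (hB : ∀ x y, B x y = B y x)
    (h : IsDualFrame B U W b bd) : Module.finrank K U = Module.finrank K W := by
  have hU := h.trace_restrict (F := 1) fun _ hx ↦ hx
  have hW := (h.symm hB).trace_restrict (F := 1) fun _ hx ↦ hx
  have hid (X : Submodule K V) : (1 : Module.End K V).restrict (fun _ hx ↦ hx) =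
      (1 : Module.End K X) := rfl
  simp only [hid, LinearMap.trace_one, Module.End.one_apply] at hU hW
  exact_mod_cast (hU.trans (sum_congr rfl fun i _ ↦ hB _ _)).trans hW.symm

end IsDualFrame

end DualFrame

section Casimir

variable {ι K g : Type*} [Fintype ι] [Field K] [LieRing g] [LieAlgebra K g]

/-- The partial Casimir operator `∑ ad_b ad_{b̌}`, called `C₁` in the informal statement. -/
def partialCasimir (b bd : ι → g) : Module.End K g :=
  ∑ i, ad K g (b i) ∘ₗ ad K g (bd i)

/-- The element `∑ [b, b̌]`, by which the two orders of factors in a partial Casimir operator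
differ. -/
def bracketSum (b bd : ι → g) : g :=
  ∑ i, ⁅b i, bd i⁆

theorem partialCasimir_apply (b bd : ι → g) (x : g) :
    partialCasimir (K := K) b bd x = ∑ i, ⁅b i, ⁅bd i, x⁆⁆ := by
  simp [partialCasimir]

theorem partialCasimir_eq_add_lie_bracketSum (b bd : ι → g) (x : g) :
    partialCasimir (K := K) b bd x = partialCasimir (K := K) bd b x + ⁅bracketSum b bd, x⁆ := by
  simp only [partialCasimir_apply, bracketSum, sum_lie, ← sum_add_distrib]
  exact sum_congr rfl fun i _ ↦ by rw [add_comm, leibniz_lie]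

theorem killingForm_partialCasimir_comm (b bd : ι → g) (x y : g) :
    killingForm K g (partialCasimir (K := K) b bd x) y =
      killingForm K g x (partialCasimir (K := K) bd b y) := by
  simp only [partialCasimir_apply, map_sum, LinearMap.sum_apply, traceForm_apply_lie_apply',
    neg_neg]

namespace IsDualFrame

variable {U W : Submodule K g} {b bd : ι → g}
  (h : IsDualFrame (killingForm K g) U W b bd)

include h

theorem trace_ad_comp_ad [Module.Finite K g] {x y : g}
    (hU : ∀ z ∈ U, (ad K g x ∘ₗ ad K g y) z ∈ U) :
    LinearMap.trace K U ((ad K g x ∘ₗ ad K g y).restrict hU) =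
      killingForm K g (partialCasimir (K := K) b bd x) y := by
  rw [h.trace_restrict, partialCasimir_apply, map_sum, LinearMap.sum_apply]
  refine sum_congr rfl fun i _ ↦ ?_
  calc killingForm K g ⁅x, ⁅y, b i⁆⁆ (bd i) = killingForm K g ⁅bd i, x⁆ ⁅y, b i⁆ := by
        rw [traceForm_comm, ← traceForm_apply_lie_apply]
    _ = -killingForm K g ⁅bd i, x⁆ ⁅b i, y⁆ := by rw [← lie_skew y, map_neg]
    _ = killingForm K g ⁅b i, ⁅bd i, x⁆⁆ y := (traceForm_apply_lie_apply' K g g _ _ _).symm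

theorem killingForm_bracketSum [Module.Finite K g] {u : g} (hU : ∀ z ∈ U, ad K g u z ∈ U) :
    killingForm K g (bracketSum b bd) u = LinearMap.trace K U ((ad K g u).restrict hU) := by
  rw [h.trace_restrict, bracketSum, map_sum, LinearMap.sum_apply]
  refine sum_congr rfl fun i _ ↦ ?_
  rw [ad_apply, traceForm_comm, ← traceForm_apply_lie_apply]

theorem sum_lie_left_add_lie_right {N : Type*} [AddCommGroup N] [Module K N] {u : g}
    (hU : ∀ x ∈ U, ⁅u, x⁆ ∈ U) (hW : ∀ x ∈ W, ⁅u, x⁆ ∈ W) (φ : g →ₗ[K] g →ₗ[K] N) :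
    ∑ i, (φ ⁅u, b i⁆ (bd i) + φ (b i) ⁅u, bd i⁆) = 0 := by
  have hleft (i) : φ ⁅u, b i⁆ (bd i) =
      ∑ j, killingForm K g ⁅u, b i⁆ (bd j) • φ (b j) (bd i) := by
    conv_lhs => rw [← h.sum_left _ (hU _ (h.left_mem i))]
    simp
  have hright (i) : φ (b i) ⁅u, bd i⁆ =
      -∑ j, killingForm K g ⁅u, b j⁆ (bd i) • φ (b i) (bd j) := by
    conv_lhs => rw [← h.sum_right _ (hW _ (h.right_mem i))]
    simp [traceForm_apply_lie_apply']
  simp_rw [sum_add_distrib, hleft, hright, sum_neg_distrib]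
  rw [sum_comm, add_neg_cancel]

theorem lie_partialCasimir {u : g} (hU : ∀ x ∈ U, ⁅u, x⁆ ∈ U) (hW : ∀ x ∈ W, ⁅u, x⁆ ∈ W)
    (x : g) :
    ⁅u, partialCasimir (K := K) b bd x⁆ = partialCasimir (K := K) b bd ⁅u, x⁆ := by
  have hsum := h.sum_lie_left_add_lie_right hU hW
    ((LinearMap.mul K (Module.End K g)).compl₁₂ (ad K g : g →ₗ[K] Module.End K g)
      (ad K g : g →ₗ[K] Module.End K g))
  rw [← sub_eq_zero]
  simpa [partialCasimir_apply, lie_sum, ← sum_sub_distrib] using LinearMap.congr_fun hsum x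

theorem lie_bracketSum {u : g} (hU : ∀ x ∈ U, ⁅u, x⁆ ∈ U) (hW : ∀ x ∈ W, ⁅u, x⁆ ∈ W) :
    ⁅u, bracketSum b bd⁆ = 0 := by
  rw [bracketSum, lie_sum,
    ← h.sum_lie_left_add_lie_right hU hW (ad K g : g →ₗ[K] Module.End K g)]
  exact sum_congr rfl fun i _ ↦ leibniz_lie _ _ _

end IsDualFrame

end Casimir

theorem trace_eq_of_eqOn_ker {K E : Type*} [Field K] [AddCommGroup E] [Module K E]
    [Module.Finite K E] {T : Module.End K E} {χ : Module.Dual K E} {t c : K} {z : E}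
    (hT : ∀ u, χ u = 0 → T u = t • u) (hz : T z = c • z) (hχ : χ z ≠ 0) :
    LinearMap.trace K E T = t * Module.finrank K E + (c - t) := by
  have hdecomp : T = t • 1 + (((c - t) * (χ z)⁻¹) • χ).smulRight z := by
    ext u
    have hker := hT (u - (χ u * (χ z)⁻¹) • z) (by simp [hχ])
    rw [map_sub, map_smul, hz, sub_eq_iff_eq_add] at hker
    simp only [hker, LinearMap.add_apply, LinearMap.smul_apply, LinearMap.smulRight_apply,
      Module.End.one_apply, smul_eq_mul]
    module
  rw [hdecomp, map_add, map_smul, LinearMap.trace_one, LinearMap.trace_smulRight]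
  simp [hχ]

theorem trace_restrict_comp_comm {K V : Type*} [Field K] [AddCommGroup V] [Module K V]
    [Module.Finite K V] {U W : Submodule K V} {F G : Module.End K V} (hF : ∀ x ∈ W, F x ∈ U)
    (hG : ∀ x ∈ U, G x ∈ W) :
    LinearMap.trace K U ((F ∘ₗ G).restrict fun x hx ↦ hF _ (hG x hx)) =
      LinearMap.trace K W ((G ∘ₗ F).restrict fun x hx ↦ hG _ (hF x hx)) :=
  LinearMap.trace_comp_comm' (G.restrict hG) (F.restrict hF)

section TripleGrading

variable {ι K g : Type*} [Fintype ι] [Field K] [LieRing g] [LieAlgebra K g]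
  {𝒜 : ZMod 3 → Submodule K g} [GradedLieAlgebra 𝒜] {b bd : ι → g}
  (hf : IsDualFrame (killingForm K g) (𝒜 1) (𝒜 2) b bd)

include hf

theorem bracketSum_mem : bracketSum b bd ∈ 𝒜 0 :=
  sum_mem fun i _ ↦ lie_mem_graded (hf.left_mem i) (hf.right_mem i) rfl

theorem partialCasimir_mem {i : ZMod 3} {x : g} (hx : x ∈ 𝒜 i) :
    partialCasimir (K := K) b bd x ∈ 𝒜 i := by
  rw [partialCasimir_apply]
  exact sum_mem fun j _ ↦ lie_mem_graded (hf.left_mem j)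
    (lie_mem_graded (hf.right_mem j) hx rfl) (by rw [← add_assoc]; exact zero_add i)

variable [Module.Finite K g]

theorem trace_zero_ad_comp_ad {x y : g} (hx : x ∈ 𝒜 1) (hy : y ∈ 𝒜 2)
    (h0 : ∀ z ∈ 𝒜 0, (ad K g x ∘ₗ ad K g y) z ∈ 𝒜 0) :
    LinearMap.trace K (𝒜 0) ((ad K g x ∘ₗ ad K g y).restrict h0) =
      killingForm K g (partialCasimir (K := K) b bd x) y := by
  have hxmap : ∀ z ∈ 𝒜 2, ad K g x z ∈ 𝒜 0 := fun z hz ↦ lie_mem_graded hx hz rfl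
  have hymap : ∀ z ∈ 𝒜 0, ad K g y z ∈ 𝒜 2 := fun z hz ↦ lie_mem_graded hy hz rfl
  rw [trace_restrict_comp_comm hxmap hymap, (hf.symm (traceForm_comm K g g)).trace_ad_comp_ad,
    traceForm_comm, ← killingForm_partialCasimir_comm]

theorem killingForm_eq_three_smul_partialCasimir {x y : g} (hx : x ∈ 𝒜 1) (hy : y ∈ 𝒜 2) :
    killingForm K g x y =
      killingForm K g (3 • partialCasimir (K := K) b bd x - ⁅bracketSum b bd, x⁆) y := by
  have hmaps (i : ZMod 3) : ∀ z ∈ 𝒜 i, (ad K g x ∘ₗ ad K g y) z ∈ 𝒜 i := fun z hz ↦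
    lie_mem_graded hx (lie_mem_graded hy hz rfl) (by rw [← add_assoc]; exact zero_add i)
  set C := partialCasimir (K := K) b bd
  set D := partialCasimir (K := K) bd b
  have hCD : D x = C x - ⁅bracketSum b bd, x⁆ :=
    eq_sub_of_add_eq (partialCasimir_eq_add_lie_bracketSum b bd x).symm
  have htrace₀ := trace_zero_ad_comp_ad hf hx hy (hmaps 0)
  have htrace₁ := hf.trace_ad_comp_ad (hmaps 1)
  have htrace₂ := (hf.symm (traceForm_comm K g g)).trace_ad_comp_ad (hmaps 2)
  calc killingForm K g x y
      = ∑ i, LinearMap.trace K (𝒜 i) ((ad K g x ∘ₗ ad K g y).restrict (hmaps i)) :=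
        LinearMap.trace_eq_sum_trace_restrict (DirectSum.Decomposition.isInternal 𝒜) hmaps
    _ = LinearMap.trace K (𝒜 0) ((ad K g x ∘ₗ ad K g y).restrict (hmaps 0)) +
        LinearMap.trace K (𝒜 1) ((ad K g x ∘ₗ ad K g y).restrict (hmaps 1)) +
        LinearMap.trace K (𝒜 2) ((ad K g x ∘ₗ ad K g y).restrict (hmaps 2)) :=
        Fin.sum_univ_three _
    _ = killingForm K g (C x) y + killingForm K g (C x) y + killingForm K g (D x) y := by
        rw [htrace₀, htrace₁, htrace₂]
    _ = _ := by
        rw [hCD]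
        simp only [map_sub, map_nsmul, LinearMap.sub_apply, LinearMap.smul_apply]
        ring

theorem three_smul_partialCasimir [IsKilling K g] {x : g} (hx : x ∈ 𝒜 1) :
    3 • partialCasimir (K := K) b bd x = x + ⁅bracketSum b bd, x⁆ := by
  have hmem : 3 • partialCasimir (K := K) b bd x - ⁅bracketSum b bd, x⁆ - x ∈ 𝒜 1 :=
    sub_mem (sub_mem (nsmul_mem (partialCasimir_mem hf hx) 3)
      (lie_mem_graded (bracketSum_mem hf) hx (zero_add 1))) hx
  have hzero := eq_zero_of_killingForm_neg_eq_zero hmem fun y hy ↦ by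
    rw [map_sub, LinearMap.sub_apply, ← killingForm_eq_three_smul_partialCasimir hf hx hy, sub_self]
  rw [← sub_eq_zero, ← hzero]
  abel

theorem trace_zero_partialCasimir :
    LinearMap.trace K (𝒜 0) ((partialCasimir b bd).restrict fun _ ↦ partialCasimir_mem hf) =
      LinearMap.trace K (𝒜 1) ((partialCasimir b bd).restrict fun _ ↦ partialCasimir_mem hf) := by
  have hmaps (i) : ∀ z ∈ 𝒜 0, (ad K g (b i) ∘ₗ ad K g (bd i)) z ∈ 𝒜 0 := fun z hz ↦
    lie_mem_graded (hf.left_mem i) (lie_mem_graded (hf.right_mem i) hz rfl) rfl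
  have hsum : (partialCasimir b bd).restrict (fun _ ↦ partialCasimir_mem hf) =
      ∑ i, (ad K g (b i) ∘ₗ ad K g (bd i)).restrict (hmaps i) := by
    ext x
    simp [partialCasimir_apply]
  rw [hsum, map_sum, hf.trace_restrict]
  exact sum_congr rfl fun i _ ↦
    trace_zero_ad_comp_ad hf (hf.left_mem i) (hf.right_mem i) (hmaps i)

end TripleGrading

section ZeroPart

variable {ι K g : Type*} [DecidableEq ι] [Field K] [LieRing g] [LieAlgebra K g]
  [AddCommMonoid ι] (𝒜 : ι → Submodule K g) [GradedLieAlgebra 𝒜]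

/-- The degree-zero part of a graded Lie algebra, as a Lie subalgebra. -/
def zeroSubalgebra : LieSubalgebra K g where
  __ := 𝒜 0
  lie_mem' hx hy := lie_mem_graded hx hy (zero_add 0)

/-- A homogeneous component of a graded Lie algebra, as a module over the degree-zero part. -/
def gradedPiece (i : ι) : LieSubmodule K (zeroSubalgebra 𝒜) g where
  __ := 𝒜 i
  lie_mem {u _} hx := lie_mem_graded u.2 hx (zero_add i)

variable {𝒜}

theorem isIrreducible_gradedPiece {i : ι} (hi : 𝒜 i ≠ ⊥)
    (hirr : ∀ U ≤ 𝒜 i, (∀ u ∈ 𝒜 0, ∀ x ∈ U, ⁅u, x⁆ ∈ U) → U = ⊥ ∨ U = 𝒜 i) :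
    IsIrreducible K (zeroSubalgebra 𝒜) (gradedPiece 𝒜 i) := by
  have : Nontrivial (gradedPiece 𝒜 i) := Submodule.nontrivial_iff_ne_bot.mpr hi
  refine .mk fun N hN ↦ ?_
  set incl := (gradedPiece 𝒜 i).toSubmodule.subtype
  have hincl : Function.Injective (Submodule.map incl) :=
    Submodule.map_injective_of_injective (Submodule.subtype_injective _)
  have hstable : ∀ u ∈ 𝒜 0, ∀ x ∈ N.toSubmodule.map incl, ⁅u, x⁆ ∈ N.toSubmodule.map incl := by
    rintro u hu _ ⟨x, hx, rfl⟩
    exact ⟨_, N.lie_mem (x := (⟨u, hu⟩ : zeroSubalgebra 𝒜)) hx, rfl⟩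
  rcases hirr _ (Submodule.map_subtype_le _ _) hstable with h | h
  · exact absurd (hincl (h.trans (Submodule.map_bot incl).symm)) (by simpa using hN)
  · exact (LieSubmodule.toSubmodule_eq_top N).mp
      (hincl (h.trans (Submodule.map_subtype_top _).symm))

variable (𝒜) in
/-- The ideal of elements of degree zero which commute with every component of nonzero degree; it
measures the failure of the degree-zero part to act faithfully. -/
def zeroPartKernel : LieIdeal K g where
  carrier := {u | u ∈ 𝒜 0 ∧ ∀ j ≠ 0, ∀ x ∈ 𝒜 j, ⁅u, x⁆ = 0}
  add_mem' hu hv := ⟨add_mem hu.1 hv.1, fun j hj x hx ↦ by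
    rw [add_lie, hu.2 j hj x hx, hv.2 j hj x hx, add_zero]⟩
  zero_mem' := ⟨zero_mem _, fun _ _ x _ ↦ zero_lie x⟩
  smul_mem' c u hu := ⟨Submodule.smul_mem _ c hu.1, fun j hj x hx ↦ by
    rw [smul_lie, hu.2 j hj x hx, smul_zero]⟩
  lie_mem {y u} hu := by
    change ⁅y, u⁆ ∈ 𝒜 0 ∧ ∀ j ≠ 0, ∀ x ∈ 𝒜 j, ⁅⁅y, u⁆, x⁆ = 0
    have hy : y ∈ ⨆ k, 𝒜 k :=
      (DirectSum.Decomposition.isInternal 𝒜).submodule_iSup_eq_top ▸ Submodule.mem_top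
    induction hy using Submodule.iSup_induction' with
    | mem k y hy =>
      by_cases hk : k = 0
      · subst hk
        refine ⟨lie_mem_graded hy hu.1 (zero_add 0), fun j hj x hx ↦ ?_⟩
        rw [lie_lie, hu.2 j hj x hx, hu.2 j hj _ (lie_mem_graded hy hx (zero_add j)), lie_zero,
          sub_zero]
      · simp [← lie_skew y u, hu.2 k hk y hy]
    | zero => simp
    | add y z _ _ hy hz =>
      rw [add_lie]
      exact ⟨add_mem hy.1 hz.1, fun j hj x hx ↦ by
        rw [add_lie, hy.2 j hj x hx, hz.2 j hj x hx, add_zero]⟩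

theorem zeroPartKernel_eq_bot [IsSimple K g] {i : ι} (hi : i ≠ 0) (hAi : 𝒜 i ≠ ⊥) :
    zeroPartKernel 𝒜 = ⊥ := by
  refine (eq_bot_or_eq_top _).resolve_right fun htop ↦ hAi ?_
  have h0 : 𝒜 0 = ⊤ := eq_top_iff.mpr fun u _ ↦
    (htop ▸ LieSubmodule.mem_top u : u ∈ zeroPartKernel 𝒜).1
  have hdisj : Disjoint (𝒜 i) (𝒜 0) :=
    (DirectSum.Decomposition.isInternal 𝒜).submodule_iSupIndep.pairwiseDisjoint hi
  rwa [h0, disjoint_top] at hdisj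

end ZeroPart

section CentralElement

variable {ι K g : Type*} [Fintype ι] [Field K] [LieRing g] [LieAlgebra K g]
  {𝒜 : ZMod 3 → Submodule K g} [GradedLieAlgebra 𝒜]

theorem eq_zero_of_lie_one_eq_zero [CharZero K] [Module.Finite K g] [IsSimple K g] (h1 : 𝒜 1 ≠ ⊥)
    {u : g} (hu : u ∈ 𝒜 0) (hu₁ : ∀ x ∈ 𝒜 1, ⁅u, x⁆ = 0) : u = 0 := by
  have hu₂ : ∀ y ∈ 𝒜 2, ⁅u, y⁆ = 0 := fun y hy ↦
    eq_zero_of_killingForm_neg_eq_zero (lie_mem_graded hu hy (zero_add 2)) fun x hx ↦ by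
      rw [traceForm_apply_lie_apply', hu₁ x hx, map_zero, neg_zero]
  have hmem : u ∈ zeroPartKernel 𝒜 := ⟨hu, fun j hj ↦ by
    match j with
    | 0 => exact absurd rfl hj
    | 1 => exact hu₁
    | 2 => exact hu₂⟩
  rwa [zeroPartKernel_eq_bot one_ne_zero h1, LieSubmodule.mem_bot] at hmem

theorem isFaithful_gradedPiece_one [CharZero K] [Module.Finite K g] [IsSimple K g] (h1 : 𝒜 1 ≠ ⊥) :
    IsFaithful K (zeroSubalgebra 𝒜) (gradedPiece 𝒜 1) :=
  (isFaithful_iff' K (zeroSubalgebra 𝒜) (gradedPiece 𝒜 1)).mpr fun u hu ↦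
    Subtype.ext <| eq_zero_of_lie_one_eq_zero h1 u.2 fun x hx ↦
      congrArg Subtype.val (hu ⟨x, hx⟩)

variable {b bd : ι → g} (hf : IsDualFrame (killingForm K g) (𝒜 1) (𝒜 2) b bd)

include hf

theorem lie_bracketSum_of_mem_zero {u : g} (hu : u ∈ 𝒜 0) : ⁅u, bracketSum b bd⁆ = 0 :=
  hf.lie_bracketSum (fun _ hx ↦ lie_mem_graded hu hx (zero_add 1))
    fun _ hx ↦ lie_mem_graded hu hx (zero_add 2)

theorem partialCasimir_swap_of_mem_zero {u : g} (hu : u ∈ 𝒜 0) :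
    partialCasimir (K := K) bd b u = partialCasimir (K := K) b bd u := by
  rw [partialCasimir_eq_add_lie_bracketSum b bd, ← lie_skew, lie_bracketSum_of_mem_zero hf hu,
    neg_zero, add_zero]

variable [Module.Finite K g]

theorem exists_lie_bracketSum_eq_smul [IsAlgClosed K]
    [IsIrreducible K (zeroSubalgebra 𝒜) (gradedPiece 𝒜 1)] :
    ∃ c : K, ∀ x ∈ 𝒜 1, ⁅bracketSum b bd, x⁆ = c • x := by
  let F : gradedPiece 𝒜 1 →ₗ⁅K, zeroSubalgebra 𝒜⁆ gradedPiece 𝒜 1 :=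
    { toEnd K (zeroSubalgebra 𝒜) (gradedPiece 𝒜 1) ⟨_, bracketSum_mem hf⟩ with
      map_lie' := fun {u m} ↦ Subtype.ext <| by
        change ⁅bracketSum b bd, ⁅(u : g), (m : g)⁆⁆ = ⁅(u : g), ⁅bracketSum b bd, (m : g)⁆⁆
        rw [leibniz_lie (u : g), lie_bracketSum_of_mem_zero hf u.2, zero_lie, zero_add] }
  obtain ⟨c, hc⟩ := exists_forall_eq_smul_of_isIrreducible F
  exact ⟨c, fun x hx ↦ congrArg Subtype.val (hc ⟨x, hx⟩)⟩

theorem trace_gradedPiece_one (u : zeroSubalgebra 𝒜) :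
    LinearMap.trace K _ (toEnd K (zeroSubalgebra 𝒜) (gradedPiece 𝒜 1) u) =
      killingForm K g (bracketSum b bd) u :=
  (hf.killingForm_bracketSum fun _ hx ↦ lie_mem_graded u.2 hx (zero_add 1)).symm

theorem traceForm_gradedPiece_one (u v : zeroSubalgebra 𝒜) :
    traceForm K (zeroSubalgebra 𝒜) (gradedPiece 𝒜 1) u v =
      killingForm K g (partialCasimir (K := K) b bd u) v :=
  hf.trace_ad_comp_ad fun _ hx ↦
    lie_mem_graded u.2 (lie_mem_graded v.2 hx (zero_add 1)) (zero_add 1)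

theorem killingForm_eq_killingForm_zeroSubalgebra_add (u v : zeroSubalgebra 𝒜) :
    killingForm K g u v = killingForm K (zeroSubalgebra 𝒜) u v +
      2 * traceForm K (zeroSubalgebra 𝒜) (gradedPiece 𝒜 1) u v := by
  have hmaps (i : ZMod 3) : ∀ z ∈ 𝒜 i, (ad K g u ∘ₗ ad K g v) z ∈ 𝒜 i := fun z hz ↦
    lie_mem_graded u.2 (lie_mem_graded v.2 hz (zero_add i)) (zero_add i)
  have htrace₂ : LinearMap.trace K (𝒜 2) ((ad K g u ∘ₗ ad K g v).restrict (hmaps 2)) =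
      traceForm K (zeroSubalgebra 𝒜) (gradedPiece 𝒜 1) u v := by
    rw [(hf.symm (traceForm_comm K g g)).trace_ad_comp_ad, partialCasimir_swap_of_mem_zero hf u.2,
      traceForm_gradedPiece_one hf]
  calc killingForm K g u v
      = ∑ i, LinearMap.trace K (𝒜 i) ((ad K g u ∘ₗ ad K g v).restrict (hmaps i)) :=
        LinearMap.trace_eq_sum_trace_restrict (DirectSum.Decomposition.isInternal 𝒜) hmaps
    _ = killingForm K (zeroSubalgebra 𝒜) u v +
        traceForm K (zeroSubalgebra 𝒜) (gradedPiece 𝒜 1) u v +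
        LinearMap.trace K (𝒜 2) ((ad K g u ∘ₗ ad K g v).restrict (hmaps 2)) :=
        Fin.sum_univ_three _
    _ = _ := by rw [htrace₂, add_assoc, two_mul]

variable {c : K} (hc : ∀ x ∈ 𝒜 1, ⁅bracketSum b bd, x⁆ = c • x)

include hc

theorem partialCasimir_bracketSum [IsKilling K g] :
    partialCasimir (K := K) b bd (bracketSum b bd) = c • bracketSum b bd := by
  have hmem : partialCasimir (K := K) b bd (bracketSum b bd) - c • bracketSum b bd ∈ 𝒜 0 :=
    sub_mem (partialCasimir_mem hf (bracketSum_mem hf)) (Submodule.smul_mem _ c (bracketSum_mem hf))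
  refine sub_eq_zero.mp (eq_zero_of_killingForm_neg_eq_zero hmem fun v hv ↦ ?_)
  have hscalar : toEnd K (zeroSubalgebra 𝒜) (gradedPiece 𝒜 1) ⟨_, bracketSum_mem hf⟩ = c • 1 :=
    LinearMap.ext fun m ↦ Subtype.ext (hc m m.2)
  have htrace := traceForm_gradedPiece_one hf ⟨_, bracketSum_mem hf⟩ ⟨v, hv⟩
  rw [traceForm_apply_apply, hscalar, LinearMap.smul_comp, map_smul] at htrace
  rw [map_sub, LinearMap.sub_apply, ← htrace, map_smul, LinearMap.smul_apply]
  exact sub_eq_zero.mpr (congrArg (c • ·) (trace_gradedPiece_one hf ⟨v, hv⟩))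

theorem bracketSum_eq_zero_or_two_mul_eq_one [IsKilling K g] :
    bracketSum b bd = 0 ∨ 2 * c = 1 := by
  refine or_iff_not_imp_right.mpr fun hc1 ↦
    eq_zero_of_killingForm_neg_eq_zero (bracketSum_mem hf) fun v hv ↦ ?_
  have hker : killingForm K (zeroSubalgebra 𝒜) ⟨_, bracketSum_mem hf⟩ ⟨v, hv⟩ = 0 := by
    have had : ad K (zeroSubalgebra 𝒜) ⟨_, bracketSum_mem hf⟩ = 0 :=
      LinearMap.ext fun u ↦ Subtype.ext <| by
        change ⁅bracketSum b bd, (u : g)⁆ = 0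
        rw [← lie_skew, lie_bracketSum_of_mem_zero hf u.2, neg_zero]
    rw [killingForm_apply_apply, had, LinearMap.zero_comp, map_zero]
  have hsplit := killingForm_eq_killingForm_zeroSubalgebra_add hf ⟨_, bracketSum_mem hf⟩ ⟨v, hv⟩
  rw [hker, traceForm_gradedPiece_one hf, partialCasimir_bracketSum hf hc, map_smul,
    LinearMap.smul_apply, smul_eq_mul] at hsplit
  exact (mul_eq_zero_iff_left (sub_ne_zero.mpr hc1)).mp (by linear_combination -hsplit)

end CentralElement

section TraceFreeCasimir

variable {ι K g : Type*} [Fintype ι] [Field K] [LieRing g] [LieAlgebra K g] [Module.Finite K g]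
  (𝒜 : ZMod 3 → Submodule K g) [GradedLieAlgebra 𝒜]

/-- The elements of degree zero acting on the component of degree one with trace zero. This is the
semisimple part of the degree-zero part if the latter acts faithfully and irreducibly on that
component. -/
noncomputable abbrev traceFreePart : LieIdeal K (zeroSubalgebra 𝒜) :=
  traceFreeIdeal K (zeroSubalgebra 𝒜) (gradedPiece 𝒜 1)

variable {𝒜} {b bd : ι → g} (hf : IsDualFrame (killingForm K g) (𝒜 1) (𝒜 2) b bd)

include hf

theorem mem_traceFreePart_iff {u : zeroSubalgebra 𝒜} :
    u ∈ traceFreePart 𝒜 ↔ killingForm K g (bracketSum b bd) u = 0 := by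
  rw [mem_traceFreeIdeal, trace_gradedPiece_one hf]

section Schur

variable {c : K} (hc : ∀ x ∈ 𝒜 1, ⁅bracketSum b bd, x⁆ = c • x)

include hc

theorem killingForm_bracketSum_partialCasimir [IsKilling K g] (u : g) :
    killingForm K g (bracketSum b bd) (partialCasimir (K := K) b bd u) =
      c * killingForm K g (bracketSum b bd) u := by
  rw [traceForm_comm, killingForm_partialCasimir_comm,
    partialCasimir_swap_of_mem_zero hf (bracketSum_mem hf), partialCasimir_bracketSum hf hc,
    map_smul, smul_eq_mul, traceForm_comm]

theorem exists_partialCasimir_eq_smul [IsAlgClosed K] [IsKilling K g]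
    [IsIrreducible K (traceFreePart 𝒜) (traceFreePart 𝒜)] :
    ∃ t : K, ∀ u ∈ traceFreePart 𝒜, partialCasimir (K := K) b bd (u : g) = t • (u : g) := by
  have hmem (u : zeroSubalgebra 𝒜) (hu : u ∈ traceFreePart 𝒜) :
      (⟨_, partialCasimir_mem hf u.2⟩ : zeroSubalgebra 𝒜) ∈ traceFreePart 𝒜 := by
    rw [mem_traceFreePart_iff hf] at hu ⊢
    rw [killingForm_bracketSum_partialCasimir hf hc, hu, mul_zero]
  let F : traceFreePart 𝒜 →ₗ⁅K, traceFreePart 𝒜⁆ traceFreePart 𝒜 :=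
    { toFun := fun u ↦ ⟨_, hmem u u.2⟩
      map_add' := fun u v ↦ Subtype.ext <| Subtype.ext <| map_add (partialCasimir b bd) (u : g) v
      map_smul' := fun a u ↦ Subtype.ext <| Subtype.ext <| map_smul (partialCasimir b bd) a (u : g)
      map_lie' := fun {u v} ↦ Subtype.ext <| Subtype.ext <| Eq.symm <|
        hf.lie_partialCasimir (u := (u : g))
          (fun _ hx ↦ lie_mem_graded u.1.2 hx (zero_add 1))
          (fun _ hx ↦ lie_mem_graded u.1.2 hx (zero_add 2)) (v : g) }
  obtain ⟨t, ht⟩ := exists_forall_eq_smul_of_isIrreducible F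
  exact ⟨t, fun u hu ↦ congrArg (fun v : traceFreePart 𝒜 ↦ (v : g)) (ht ⟨u, hu⟩)⟩

end Schur

variable {t : K}
  (ht : ∀ u ∈ traceFreePart 𝒜, partialCasimir (K := K) b bd (u : g) = t • (u : g))

include ht

theorem traceForm_traceFreePart (u v : traceFreePart 𝒜) :
    traceForm K (traceFreePart 𝒜) (gradedPiece 𝒜 1) u v = t * killingForm K g u v := by
  have h := traceForm_gradedPiece_one hf u v
  rw [ht u u.2, map_smul, LinearMap.smul_apply, smul_eq_mul] at h
  exact h

theorem killingForm_traceFreePart (u v : traceFreePart 𝒜) :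
    killingForm K (traceFreePart 𝒜) u v = (1 - 2 * t) * killingForm K g u v := by
  have hsplit := killingForm_eq_killingForm_zeroSubalgebra_add hf u v
  have htr := traceForm_traceFreePart hf ht u v
  change traceForm K (zeroSubalgebra 𝒜) (gradedPiece 𝒜 1) u v = _ at htr
  have hrestrict : killingForm K (traceFreePart 𝒜) u v = killingForm K (zeroSubalgebra 𝒜) u v := by
    rw [LieIdeal.killingForm_eq]
    rfl
  rw [hrestrict]
  linear_combination -hsplit - 2 * htr

theorem finrank_relation_of_partialCasimir_eq_smul [IsKilling K g] {c : K}
    (hc : ∀ x ∈ 𝒜 1, ⁅bracketSum b bd, x⁆ = c • x)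
    (hne : killingForm K g (bracketSum b bd) (bracketSum b bd) ≠ 0) :
    3 * (t * Module.finrank K (𝒜 0) + (c - t)) = (1 + c) * Module.finrank K (𝒜 1) := by
  have h0 : LinearMap.trace K (𝒜 0) ((partialCasimir b bd).restrict fun _ ↦ partialCasimir_mem hf) =
      t * Module.finrank K (𝒜 0) + (c - t) :=
    trace_eq_of_eqOn_ker (χ := (killingForm K g (bracketSum b bd)).domRestrict (𝒜 0))
      (z := ⟨_, bracketSum_mem hf⟩)
      (fun u hu ↦ Subtype.ext (ht u ((mem_traceFreePart_iff hf (u := u)).mpr hu)))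
      (Subtype.ext (partialCasimir_bracketSum hf hc)) hne
  have h1 : (3 : K) • (partialCasimir b bd).restrict (fun _ ↦ partialCasimir_mem hf) =
      ((1 + c) • 1 : Module.End K (𝒜 1)) := by
    refine LinearMap.ext fun x ↦ Subtype.ext ?_
    change (3 : K) • partialCasimir b bd (x : g) = (1 + c) • (x : g)
    rw [ofNat_smul_eq_nsmul, three_smul_partialCasimir hf x.2, hc x x.2, add_smul, one_smul]
  rw [← h0, trace_zero_partialCasimir hf, ← smul_eq_mul, ← map_smul, h1, map_smul,
    LinearMap.trace_one, smul_eq_mul]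

end TraceFreeCasimir

section CentralElementVanishes

variable {ι K g : Type*} [Fintype ι] [Field K] [CharZero K] [IsAlgClosed K] [LieRing g]
  [LieAlgebra K g] [Module.Finite K g] [IsSimple K g] {𝒜 : ZMod 3 → Submodule K g}
  [GradedLieAlgebra 𝒜] [IsIrreducible K (zeroSubalgebra 𝒜) (gradedPiece 𝒜 1)] {b bd : ι → g}
  (hf : IsDualFrame (killingForm K g) (𝒜 1) (𝒜 2) b bd)

include hf

theorem bracketSum_eq_zero (h0 : Module.finrank K (𝒜 0) = 14) (h1 : Module.finrank K (𝒜 1) = 7) :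
    bracketSum b bd = 0 := by
  have hV : (Module.finrank K (gradedPiece 𝒜 1)).Prime := by
    change (Module.finrank K (𝒜 1)).Prime
    norm_num [h1]
  have := isFaithful_gradedPiece_one (𝒜 := 𝒜) fun h ↦ by
    rw [h, finrank_bot] at h1
    norm_num at h1
  obtain ⟨c, hc⟩ := exists_lie_bracketSum_eq_smul hf
  refine (bracketSum_eq_zero_or_two_mul_eq_one hf hc).resolve_right fun hc₂ ↦ ?_
  have hc₀ : c ≠ 0 := by
    rintro rfl
    simp at hc₂
  set z : zeroSubalgebra 𝒜 := ⟨_, bracketSum_mem hf⟩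
  have hz : ∀ m : gradedPiece 𝒜 1, ⁅z, m⁆ = c • m := fun m ↦ Subtype.ext (hc m m.2)
  have hdim : Module.finrank K (traceFreePart 𝒜) + 1 = 14 :=
    (finrank_traceFreeIdeal_add_one hz hc₀).trans h0
  have : Nontrivial (traceFreePart 𝒜) := Module.nontrivial_of_finrank_pos (R := K) (by omega)
  have := isIrreducible_self_traceFreeIdeal hz hc₀ hV
  have := isKilling_traceFreeIdeal hz hc₀
  obtain ⟨t, ht⟩ := exists_partialCasimir_eq_smul hf hc
  have hrel := finrank_relation_of_partialCasimir_eq_smul hf ht hc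
    (trace_gradedPiece_one hf z ▸ trace_toEnd_ne_zero hz hc₀)
  rw [h0, h1] at hrel
  have ht' : 13 * t = 3 := by
    push_cast at hrel
    linear_combination (1 / 3) * hrel + (2 / 3) * hc₂
  obtain ⟨u, hu⟩ := exists_three_mul_killingForm_ne (K := K) (traceFreePart 𝒜) (gradedPiece 𝒜 1)
    (by omega)
  refine hu ?_
  rw [killingForm_traceFreePart hf ht, traceForm_traceFreePart hf ht]
  linear_combination (-killingForm K g u u) * ht'

theorem three_smul_partialCasimir_eq_self (h0 : Module.finrank K (𝒜 0) = 14)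
    (h1 : Module.finrank K (𝒜 1) = 7) {x : g} (hx : x ∈ 𝒜 1) :
    3 • partialCasimir (K := K) b bd x = x := by
  rw [three_smul_partialCasimir hf hx, bracketSum_eq_zero hf h0 h1, zero_lie, add_zero]

end CentralElementVanishes

section EigenspaceGrading

variable {K : Type*} [Field K] {n : ℕ} {ε : K}

/-- The eigenspace of `f` with eigenvalue `ε ^ i`, where `ε` is meant to be an `n`-th root of unity,
so that the exponent is indexed by `ZMod n`; for `n = 3` these are the `g₀`, `g₁`, `g₂` of the
informal statement. -/
def rootEigenspace {V : Type*} [AddCommGroup V] [Module K V] (ε : K) (f : Module.End K V)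
    (i : ZMod n) : Submodule K V :=
  f.eigenspace (ε ^ i.val)

theorem isInternal_rootEigenspace [CharZero K] [IsAlgClosed K] [NeZero n] {V : Type*}
    [AddCommGroup V] [Module K V] [Module.Finite K V]
    (hε : IsPrimitiveRoot ε n) {f : Module.End K V} (hf : f ^ n = 1) :
    DirectSum.IsInternal (rootEigenspace (n := n) ε f) := by
  have hss : f.IsSemisimple := by
    refine Module.End.isSemisimple_of_squarefree_aeval_eq_zero
      (p := Polynomial.X ^ n - Polynomial.C 1)
      (Polynomial.separable_X_pow_sub_C 1 (NeZero.ne _) one_ne_zero).squarefree ?_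
    simp [hf]
  refine DirectSum.isInternal_submodule_of_iSupIndep_of_iSup_eq_top
    (f.eigenspaces_iSupIndep.comp fun i j hij ↦ ZMod.val_injective n
      (hε.pow_inj i.val_lt j.val_lt hij)) (eq_top_iff.mpr ?_)
  rw [← hss.iSup_eigenspace_eq_top]
  refine iSup_le fun μ ↦ ?_
  by_cases hμ : f.HasEigenvalue μ
  · have hμn : μ ^ n = 1 := by
      obtain ⟨m, hm⟩ := hμ.exists_hasEigenvector
      have := hm.pow_apply n
      rw [hf, Module.End.one_apply] at this
      exact (smul_left_injective K hm.2 (by simpa using this.symm))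
    obtain ⟨k, hk, rfl⟩ := hε.eq_pow_of_pow_eq_one hμn
    refine le_trans (le_of_eq ?_) (le_iSup _ (k : ZMod n))
    rw [rootEigenspace, ZMod.val_cast_of_lt hk]
  · rw [Module.End.hasEigenvalue_iff, not_not] at hμ
    exact hμ ▸ bot_le

theorem gradedBracket_rootEigenspace [NeZero n] {L : Type*} [LieRing L] [LieAlgebra K L]
    (hε : IsPrimitiveRoot ε n) (σ : L →ₗ⁅K⁆ L) :
    SetLike.GradedBracket (rootEigenspace (n := n) ε (σ : L →ₗ[K] L)) where
  bracket_mem i j x y hx hy := by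
    simp only [rootEigenspace, Module.End.mem_eigenspace_iff, LieHom.coe_toLinearMap] at hx hy ⊢
    rw [LieHom.map_lie, hx, hy, smul_lie, lie_smul, smul_smul, ← pow_add, ZMod.val_add,
      ← pow_mod_orderOf ε (i.val + j.val), ← hε.eq_orderOf]

end EigenspaceGrading

section TripleGradingDual

variable {ι K g : Type*} [Fintype ι] [Field K] [LieRing g] [LieAlgebra K g]
  [Module.Finite K g] {𝒜 : ZMod 3 → Submodule K g} [GradedLieAlgebra 𝒜] {b bd : ι → g}

theorem finrank_eq_finrank_zero_add_two_mul_finrank_one [CharZero K]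
    (hf : IsDualFrame (killingForm K g) (𝒜 1) (𝒜 2) b bd) :
    Module.finrank K g = Module.finrank K (𝒜 0) + 2 * Module.finrank K (𝒜 1) := by
  calc Module.finrank K g = ∑ i, Module.finrank K (𝒜 i) := by
        rw [(DirectSum.decomposeLinearEquiv 𝒜).finrank_eq, Module.finrank_directSum]
    _ = Module.finrank K (𝒜 0) + Module.finrank K (𝒜 1) + Module.finrank K (𝒜 2) :=
        Fin.sum_univ_three _
    _ = _ := by rw [← hf.finrank_eq (traceForm_comm K g g), add_assoc, two_mul]

theorem isDualFrame_killingForm_of_dual [IsKilling K g] [DecidableEq ι]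
    {B : LinearMap.BilinForm K g} {lam : K} (hlam : lam ≠ 0)
    (hkill : ∀ x y, killingForm K g x y = lam * B x y)
    (hb : ∀ i, b i ∈ 𝒜 1) (hbd : ∀ i, bd i ∈ 𝒜 2)
    (hspan : 𝒜 1 ≤ Submodule.span K (Set.range b))
    (hdual : ∀ i j, B (b i) (bd j) = if i = j then 1 else 0) :
    IsDualFrame (killingForm K g) (𝒜 1) (𝒜 2) b (lam⁻¹ • bd) := by
  refine .of_dual hb (fun i ↦ Submodule.smul_mem _ _ (hbd i)) hspan (fun i j ↦ ?_) fun y hy h ↦ ?_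
  · rw [Pi.smul_apply, map_smul, smul_eq_mul, hkill, inv_mul_cancel_left₀ hlam, hdual]
  · exact eq_zero_of_killingForm_neg_eq_zero hy fun x hx ↦ (traceForm_comm K g g y x).trans (h x hx)

theorem sum_lie_lie_eq_div_three_smul [CharZero K] [IsAlgClosed K] [IsSimple K g]
    [IsIrreducible K (zeroSubalgebra 𝒜) (gradedPiece 𝒜 1)] [DecidableEq ι]
    {B : LinearMap.BilinForm K g} {lam : K} (hkill : ∀ x y, killingForm K g x y = lam * B x y)
    (hdim : Module.finrank K g = 28) (h1 : Module.finrank K (𝒜 1) = 7)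
    (hb : ∀ i, b i ∈ 𝒜 1) (hbd : ∀ i, bd i ∈ 𝒜 2)
    (hspan : 𝒜 1 ≤ Submodule.span K (Set.range b))
    (hdual : ∀ i j, B (b i) (bd j) = if i = j then 1 else 0) {x : g} (hx : x ∈ 𝒜 1) :
    ∑ i, ⁅b i, ⁅bd i, x⁆⁆ = (lam / 3) • x := by
  have hlam : lam ≠ 0 := by
    rintro rfl
    have : Nontrivial g := Module.nontrivial_of_finrank_pos (R := K) (by omega)
    exact (IsKilling.killingForm_nondegenerate K g).ne_zero (by ext; simp [hkill])
  have hf := isDualFrame_killingForm_of_dual hlam hkill hb hbd hspan hdual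
  have h0 : Module.finrank K (𝒜 0) = 14 := by
    have := finrank_eq_finrank_zero_add_two_mul_finrank_one hf
    omega
  have hC : (3 : K) • lam⁻¹ • ∑ i, ⁅b i, ⁅bd i, x⁆⁆ = x := by
    have := three_smul_partialCasimir_eq_self hf h0 h1 hx
    simpa only [partialCasimir_apply, Pi.smul_apply, smul_lie, lie_smul, ← smul_sum,
      ← ofNat_smul_eq_nsmul K] using this
  calc ∑ i, ⁅b i, ⁅bd i, x⁆⁆ = (lam / 3) • (3 : K) • lam⁻¹ • ∑ i, ⁅b i, ⁅bd i, x⁆⁆ := by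
        rw [smul_smul, smul_smul, div_mul_cancel₀ _ three_ne_zero, mul_inv_cancel₀ hlam, one_smul]
    _ = (lam / 3) • x := by rw [hC]

end TripleGradingDual

theorem stmt18_general {ι K g : Type*} [Fintype ι] [DecidableEq ι] [Field K] [CharZero K]
    [IsAlgClosed K] [LieRing g] [LieAlgebra K g] [Module.Finite K g] [IsSimple K g]
    {ε : K} (hε : IsPrimitiveRoot ε 3) (σ : g →ₗ⁅K⁆ g) (hord : σ.toLinearMap ^ 3 = 1)
    {B : LinearMap.BilinForm K g} {lam : K} (hkill : ∀ x y, killingForm K g x y = lam * B x y)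
    (hdim : Module.finrank K g = 28) {b bd : ι → g}
    (hb : ∀ i, σ (b i) = ε • b i) (hbd : ∀ i, σ (bd i) = ε ^ 2 • bd i)
    (hspan : ∀ x, σ x = ε • x → x ∈ Submodule.span K (Set.range b))
    (hdual : ∀ i j, B (b i) (bd j) = if i = j then 1 else 0)
    (hdim₁ : Module.finrank K (Module.End.eigenspace σ.toLinearMap ε) = 7)
    (hirr : ∀ U ≤ Module.End.eigenspace σ.toLinearMap ε,
      (∀ u, σ u = u → ∀ x ∈ U, ⁅u, x⁆ ∈ U) → U = ⊥ ∨ U = Module.End.eigenspace σ.toLinearMap ε)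
    {x : g} (hx : σ x = ε • x) : ∑ i, ⁅b i, ⁅bd i, x⁆⁆ = (lam / 3) • x := by
  let 𝒜 : ZMod 3 → Submodule K g := rootEigenspace ε σ.toLinearMap
  let : GradedLieAlgebra 𝒜 :=
    { gradedBracket_rootEigenspace hε σ,
      (isInternal_rootEigenspace hε hord).chooseDecomposition with }
  have mem_zero {u : g} : u ∈ 𝒜 0 ↔ σ u = u := by simp [𝒜, rootEigenspace]
  have eq_one : 𝒜 1 = Module.End.eigenspace σ.toLinearMap ε := by
    rw [← pow_one ε]
    rfl
  have mem_one {y : g} : y ∈ 𝒜 1 ↔ σ y = ε • y := by simp [eq_one]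
  have h1 : Module.finrank K (𝒜 1) = 7 := eq_one ▸ hdim₁
  have : IsIrreducible K (zeroSubalgebra 𝒜) (gradedPiece 𝒜 1) := by
    refine isIrreducible_gradedPiece (fun h ↦ ?_) ?_
    · rw [h, finrank_bot] at h1
      norm_num at h1
    · simpa only [mem_zero, eq_one] using hirr
  exact sum_lie_lie_eq_div_three_smul hkill hdim h1 (fun i ↦ mem_one.mpr (hb i))
    (fun i ↦ Module.End.mem_eigenspace_iff.mpr (hbd i)) (fun y hy ↦ hspan y (mem_one.mp hy)) hdual
    (mem_one.mpr hx)

/-- `g` of type `D₄` (`so₈(ℂ)`) with the order-3 triality automorphism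
`σ`, whose fixed algebra is of type `G₂`.  The type-`D₄` normalization is recorded by
the Killing form identity `κ = 2ȟ·B = 12·B` (dual Coxeter number `ȟ = 6`), and the
`7`-dimensional `ε`-eigenspace `g₁` is an irreducible module over the fixed subalgebra
`g^σ`.  With dual bases `{b}` of `g₁` and `{b̌}` of `g₂` with respect to the normalized
invariant form `B`, the partial Casimir operator `C₁ = Σ_b ad_b ad_{b̌}` acts on `g₁`
by the scalar `4 = 2ȟ/3`. -/
theorem stmt18 {g : Type*} [LieRing g] [LieAlgebra ℂ g]
    [Module.Finite ℂ g] [LieAlgebra.IsSimple ℂ g]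
    (ε : ℂ) (hε : IsPrimitiveRoot ε 3)
    (σ : g →ₗ⁅ℂ⁆ g) (hord : σ.toLinearMap ^ 3 = 1)
    (B : LinearMap.BilinForm ℂ g)
    (hsymm : ∀ x y : g, B x y = B y x)
    (hinv : ∀ x y z : g, B ⁅x, y⁆ z = B x ⁅y, z⁆)
    (hkill : ∀ x y : g, LieModule.traceForm ℂ g g x y = (12 : ℂ) * B x y)
    (hdim : Module.finrank ℂ g = 28)
    (ι₁ : Type*) [Fintype ι₁] [DecidableEq ι₁] (b bd : ι₁ → g)
    (hbgr : ∀ i, σ (b i) = ε • b i)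
    (hbdgr : ∀ i, σ (bd i) = ε ^ 2 • bd i)
    (hspan : ∀ x : g, σ x = ε • x → x ∈ Submodule.span ℂ (Set.range b))
    (hdual : ∀ i j, B (b i) (bd j) = if i = j then (1 : ℂ) else 0)
    (hdim₁ : Module.finrank ℂ (Module.End.eigenspace σ.toLinearMap ε) = 7)
    (hirr : ∀ U : Submodule ℂ g, U ≤ Module.End.eigenspace σ.toLinearMap ε →
      (∀ u : g, σ u = u → ∀ x ∈ U, ⁅u, x⁆ ∈ U) →
      U = ⊥ ∨ U = Module.End.eigenspace σ.toLinearMap ε) :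
    ∀ x : g, σ x = ε • x →
      ∑ i, ⁅b i, ⁅bd i, x⁆⁆ = ((2 * 6 / 3 : ℂ)) • x := by
  rw [show (2 * 6 / 3 : ℂ) = 12 / 3 by norm_num]
  exact fun x hx ↦ stmt18_general hε σ hord hkill hdim hbgr hbdgr hspan hdual hdim₁ hirr hx
end
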